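/- arXiv:2512.16540 — 2 statements merged into one kernel-verified Lean document; each statement's English description precedes it below -/
import Mathlib

section
/- Let P = {P_1,…,P_k} be a partition of [s] and set q_i = min P_i. In the Chow ring A*(P_s) = ℤ[t_0,…,t_s]/(t_0^{n²}, t_1^n,…,t_s^n) of P_s = P^{n²-1} × (P^{n-1})^{×s}, the class of W_{s,P} satisfies [W_{s,P}] = φ_P([W̃_k]) · ∏_{i=1}^{k} ∏_{p ∈ P_i \ {q_i}} ( Σ_{r=0}^{n-1} t_{q_i}^{n-1-r} t_p^r ), where W̃_k = W_{k,{{1},…,{k}}} and φ_P : A*(P_k) → A*(P_s) is the ring map sending h_0 ↦ t_0 and h_i ↦ t_{q_i} for i ∈ [k] (the empty product over P_i \ {q_i} being 1 when |P_i| = 1). -/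
noncomputable section

/-! ## Zariski topology on complex affine space -/

/-- The Zariski topology on the affine space `ι → ℂ`: the basic open sets are the
complements of hypersurfaces. -/
def zTop (ι : Type*) : TopologicalSpace (ι → ℂ) :=
  TopologicalSpace.generateFrom
    {U | ∃ p : MvPolynomial ι ℂ, U = {x | MvPolynomial.eval x p ≠ 0}}

/-- Zariski open subset of affine space. -/
def zOpen {ι : Type*} (U : Set (ι → ℂ)) : Prop := @IsOpen _ (zTop ι) U

/-- Zariski closed subset of affine space. -/
def zClosed {ι : Type*} (Z : Set (ι → ℂ)) : Prop := @IsClosed _ (zTop ι) Z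

/-- Zariski density. -/
def zDense {ι : Type*} (S : Set (ι → ℂ)) : Prop := @Dense _ (zTop ι) S

/-- Zariski closure. -/
def zClosure {ι : Type*} (S : Set (ι → ℂ)) : Set (ι → ℂ) := @closure _ (zTop ι) S

/-- Irreducibility in the Zariski topology. -/
def zIrred {ι : Type*} (S : Set (ι → ℂ)) : Prop := @IsIrreducible _ (zTop ι) S

/-- The dimension of a subset of affine space: the topological Krull dimension of the
subspace topology induced by the Zariski topology. -/
def zDim {ι : Type*} (S : Set (ι → ℂ)) : WithBot ℕ∞ :=
  @topologicalKrullDim S (TopologicalSpace.induced Subtype.val (zTop ι))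

/-- The common zero set of a family of polynomials. -/
def vanishSet {ι : Type*} (S : Set (MvPolynomial ι ℂ)) : Set (ι → ℂ) :=
  {x | ∀ p ∈ S, MvPolynomial.eval x p = 0}

/-- The ideal of all polynomials vanishing on a subset of affine space. -/
def vanishingIdealOf {ι : Type*} (X : Set (ι → ℂ)) : Ideal (MvPolynomial ι ℂ) where
  carrier := {p | ∀ x ∈ X, MvPolynomial.eval x p = 0}
  add_mem' := by
    intro a b ha hb x hx
    simp [ha x hx, hb x hx]
  zero_mem' := by
    intro x hx
    simp
  smul_mem' := by
    intro c p hp x hx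
    simp [smul_eq_mul, hp x hx]

/-- A subset of `ι → ℂ` is a cone if it is stable under scalar multiplication. -/
def IsCone {ι : Type*} (X : Set (ι → ℂ)) : Prop :=
  ∀ (c : ℂ) (v : ι → ℂ), v ∈ X → c • v ∈ X

/-- The affine-linear subspace cut out by `k` affine-linear equations whose coefficients are
recorded by `a` (the `none` coordinate records the constant term). -/
def affSlice {ι : Type*} [Fintype ι] {k : ℕ} (a : Fin k × Option ι → ℂ) : Set (ι → ℂ) :=
  {x | ∀ j : Fin k, a (j, none) + ∑ i : ι, a (j, some i) * x i = 0}

/-- `hasConeDegree C k δ` : the projective variety with affine cone `C ⊆ ℂ^ι` and projective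
dimension `k` has degree `δ`, expressed by saying that a generic affine-linear slice of `C` of
codimension `k + 1` consists of exactly `δ` points. -/
def hasConeDegree {ι : Type*} [Fintype ι] (C : Set (ι → ℂ)) (k δ : ℕ) : Prop :=
  ∃ U : Set (Fin (k + 1) × Option ι → ℂ), zOpen U ∧ zDense U ∧
    ∀ a ∈ U, (C ∩ affSlice a).ncard = δ

/-! ## Eigenvectors and the Kalman variety -/

/-- `v` is an eigenvector of the matrix `A`. -/
def IsEigenvector {n : ℕ} (A : Matrix (Fin n) (Fin n) ℂ) (v : Fin n → ℂ) : Prop :=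
  v ≠ 0 ∧ ∃ lam : ℂ, A.mulVec v = lam • v

/-- The space of `n × n` complex matrices, presented as an affine space. -/
abbrev MatSpace (n : ℕ) := Fin n × Fin n → ℂ

/-- The matrix corresponding to a point of `MatSpace n`. -/
def toMat {n : ℕ} (A : MatSpace n) : Matrix (Fin n) (Fin n) ℂ :=
  Matrix.of fun i j => A (i, j)

/-- The affine cone over the Kalman variety `𝒦(X)` of the projective variety whose affine
cone is `X`: all matrices having an eigenvector lying on `X`. -/
def kalmanCone {n : ℕ} (X : Set (Fin n → ℂ)) : Set (MatSpace n) :=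
  {A | ∃ v ∈ X, IsEigenvector (toMat A) v}



/-! ## Symmetric powers of matrices and Kalman matrices -/

/-- Index set for the monomials of degree `d` in `n` variables. -/
abbrev MonIdx (n d : ℕ) := Sym (Fin n) d

/-- The exponent vector of the monomial indexed by `σ`. -/
def monExp {n d : ℕ} (σ : MonIdx n d) : Fin n →₀ ℕ :=
  Multiset.toFinsupp (σ : Multiset (Fin n))

/-- The generic `n × n` matrix, whose entries are the variables of `ℂ[A]`. -/
def genMat (n : ℕ) : Matrix (Fin n) (Fin n) (MvPolynomial (Fin n × Fin n) ℂ) :=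
  Matrix.of fun i j => MvPolynomial.X (i, j)

/-- The `d`-th symmetric power `ρ_d(A)` of a square matrix `A`, i.e. the matrix (in the basis of
monomials of degree `d`) of the induced action of `A` on forms of degree `d`: the entry at
`(τ, σ)` is the coefficient of `x^σ` in `(A·x)^τ`. -/
def symPow {R : Type*} [CommRing R] {n : ℕ} (d : ℕ) (A : Matrix (Fin n) (Fin n) R) :
    Matrix (MonIdx n d) (MonIdx n d) R :=
  Matrix.of fun τ σ =>
    MvPolynomial.coeff (monExp σ)
      (∏ j : Fin n, (∑ k : Fin n, MvPolynomial.C (A j k) * MvPolynomial.X k) ^ (monExp τ j))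

/-- The coefficient vector of a form of degree `d`. -/
def coeffVec {n : ℕ} (d : ℕ) (f : MvPolynomial (Fin n) ℂ) : MonIdx n d → ℂ :=
  fun σ => MvPolynomial.coeff (monExp σ) f

/-- The form of degree `d` with coefficient vector `c`. -/
def polyOf {n d : ℕ} (c : MonIdx n d → ℂ) : MvPolynomial (Fin n) ℂ :=
  ∑ σ : MonIdx n d, MvPolynomial.monomial (monExp σ) (c σ)

/-- The rectangular Kalman matrix of order `d` associated with a `p × N` coefficient matrix `C`:
its rows are the rows of `C`, `C·ρ_d(A)`, ..., `C·ρ_d(A)^{t-1}` for the generic matrix `A`. -/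
def kalmanMat {n d p : ℕ} (t : ℕ) (C : Matrix (Fin p) (MonIdx n d) ℂ) :
    Matrix (Fin t × Fin p) (MonIdx n d) (MvPolynomial (Fin n × Fin n) ℂ) :=
  Matrix.of fun r τ =>
    ∑ κ : MonIdx n d, MvPolynomial.C (C r.2 κ) * ((symPow d (genMat n)) ^ (r.1 : ℕ)) κ τ

/-- The square Kalman matrix `K_d(f)` of a form `f` with coefficient vector `c`: the rows are
`C_f ρ_d(A)^i` for `i = 0, …, N - 1` (indexed by monomials through a fixed enumeration). -/
def kalmanSq {n : ℕ} (d : ℕ) (c : MonIdx n d → ℂ) :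
    Matrix (MonIdx n d) (MonIdx n d) (MvPolynomial (Fin n × Fin n) ℂ) :=
  Matrix.of fun σ τ =>
    ∑ κ : MonIdx n d, MvPolynomial.C (c κ) *
      ((symPow d (genMat n)) ^ ((Fintype.equivFin (MonIdx n d)) σ : ℕ)) κ τ

/-- The determinant of the square Kalman matrix of order `d`. -/
def kalmanDet {n : ℕ} (d : ℕ) (c : MonIdx n d → ℂ) : MvPolynomial (Fin n × Fin n) ℂ :=
  (kalmanSq d c).det

/-- The locus of matrices at which all maximal minors of a (rectangular) matrix of polynomials
in `ℂ[A]` vanish. -/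
def maxMinorsZeroSet {n d : ℕ} {ridx : Type*}
    (M : Matrix ridx (MonIdx n d) (MvPolynomial (Fin n × Fin n) ℂ)) : Set (MatSpace n) :=
  {A | ∀ e : MonIdx n d → ridx, Function.Injective e →
    MvPolynomial.eval A (Matrix.det (Matrix.of fun σ τ => M (e σ) τ)) = 0}



/-! ## Polarizations and μ-Kalman varieties -/

/-- Evaluation of the multihomogeneous polarization `f_μ` of `f` at a tuple of vectors
`v_1, …, v_s` (up to a nonzero rational normalization constant): the coefficient of `t^μ`
in `f(t_1 v_1 + ⋯ + t_s v_s)`. -/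
def polarEval {n s : ℕ} (f : MvPolynomial (Fin n) ℂ) (μ : Fin s → ℕ)
    (v : Fin s → Fin n → ℂ) : ℂ :=
  MvPolynomial.coeff (Finsupp.equivFunOnFinite.symm μ)
    (MvPolynomial.eval₂ MvPolynomial.C
      (fun k => ∑ i : Fin s, MvPolynomial.C (v i k) * MvPolynomial.X i) f)

/-- The affine cone over the `μ`-Kalman variety `𝒦_μ(f)`: the Zariski closure of the set of
matrices admitting linearly independent eigenvectors `v_1, …, v_s` with `f_μ(v_1, …, v_s) = 0`. -/
def muKalmanCone {n : ℕ} (f : MvPolynomial (Fin n) ℂ) {s : ℕ} (μ : Fin s → ℕ) :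
    Set (MatSpace n) :=
  zClosure {A | ∃ v : Fin s → (Fin n → ℂ),
    (∀ i, IsEigenvector (toMat A) (v i)) ∧ LinearIndependent ℂ v ∧ polarEval f μ v = 0}

/-- The parts of a partition of `d`, listed as a tuple. -/
def partTuple (d : ℕ) (μ : Nat.Partition d) : Fin (Multiset.card μ.parts) → ℕ :=
  fun i => μ.parts.toList.get (i.cast (Multiset.length_toList _).symm)

/-- The multiset of nonzero exponents of the monomial indexed by `σ`. -/
def expMultiset {n d : ℕ} (σ : Sym (Fin n) d) : Multiset ℕ :=
  Multiset.filter (fun e => e ≠ 0)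
    (Multiset.map (fun i => Multiset.toFinsupp (σ : Multiset (Fin n)) i) Finset.univ.val)

/-! ## Tangent spaces, smooth points and singular loci -/

/-- The Zariski tangent space of `X ⊆ ℂ^ι` at `x`: the common kernel of the differentials at
`x` of all polynomials vanishing on `X`. -/
def tangentSpace {ι : Type*} [Fintype ι] (X : Set (ι → ℂ)) (x : ι → ℂ) :
    Submodule ℂ (ι → ℂ) where
  carrier := {u | ∀ p : MvPolynomial ι ℂ, (∀ y ∈ X, MvPolynomial.eval y p = 0) →
      ∑ i : ι, u i * MvPolynomial.eval x (MvPolynomial.pderiv i p) = 0}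
  add_mem' := by
    intro a b ha hb p hp
    have h1 := ha p hp
    have h2 := hb p hp
    simp only [Pi.add_apply, add_mul, Finset.sum_add_distrib, h1, h2, add_zero]
  zero_mem' := by
    intro p hp
    simp
  smul_mem' := by
    intro c u hu p hp
    have h1 := hu p hp
    simp only [Pi.smul_apply, smul_eq_mul, mul_assoc, ← Finset.mul_sum, h1, mul_zero]

/-- The local dimension of `X` at `x`, in the Zariski topology. -/
def zLocalDim {ι : Type*} (X : Set (ι → ℂ)) (x : ι → ℂ) : WithBot ℕ∞ :=
  ⨅ (U : Set (ι → ℂ)) (_ : zOpen U) (_ : x ∈ U), zDim (X ∩ U)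

/-- `x` is a smooth point of `X`: the Zariski tangent space has dimension equal to the local
dimension of `X` at `x`. -/
def smoothAt {ι : Type*} [Fintype ι] (X : Set (ι → ℂ)) (x : ι → ℂ) : Prop :=
  ((Module.finrank ℂ (tangentSpace X x) : ℕ∞) : WithBot ℕ∞) = zLocalDim X x

/-- The affine cone over the singular locus of the projective variety whose affine cone is `X`:
the nonzero points of `X` that are not smooth points. -/
def projSingCone {ι : Type*} [Fintype ι] (X : Set (ι → ℂ)) : Set (ι → ℂ) :=
  {x | x ∈ X ∧ x ≠ 0 ∧ ¬ smoothAt X x}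

/-- The affine cone over the (reduced) singular locus of the Kalman variety of the projective
variety with affine cone `X`. -/
def singKalmanCone {n : ℕ} (X : Set (Fin n → ℂ)) : Set (MatSpace n) :=
  zClosure (projSingCone (zClosure (kalmanCone X)))



/-! ## The spaces `ℙ_s = ℙ^{n²-1} × (ℙ^{n-1})^s` (as multicones) -/

/-- Coordinates for the multicone over `ℙ^{n²-1} × (ℙ^{n-1})^{×s}`. -/
abbrev MIdx (n s : ℕ) := (Fin n × Fin n) ⊕ (Fin s × Fin n)

/-- The matrix component of a point of the multicone. -/
def matPart {n s : ℕ} (x : MIdx n s → ℂ) : MatSpace n := fun ij => x (Sum.inl ij)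

/-- The `i`-th vector component of a point of the multicone. -/
def vecPart {n s : ℕ} (x : MIdx n s → ℂ) (i : Fin s) : Fin n → ℂ := fun k => x (Sum.inr (i, k))

/-- A partition of `{1, …, s}` into `k` (indexed) nonempty pairwise disjoint blocks. -/
structure IdxPartition (s k : ℕ) where
  block : Fin k → Finset (Fin s)
  nonempty : ∀ i, (block i).Nonempty
  disj : ∀ i j, i ≠ j → Disjoint (block i) (block j)
  cover : ∀ p : Fin s, ∃ i, p ∈ block i

/-- The minimal representative of the `i`-th block. -/
def IdxPartition.rep {s k : ℕ} (P : IdxPartition s k) (i : Fin k) : Fin s :=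
  (P.block i).min' (P.nonempty i)

/-- The finest partition, all of whose blocks are singletons. -/
def singletonPartition (s : ℕ) : IdxPartition s s where
  block i := {i}
  nonempty i := ⟨i, by simp⟩
  disj i j h := Finset.disjoint_singleton.2 h
  cover p := ⟨p, by simp⟩

/-- A tuple of nonzero vectors is `P`-compatible: vectors within each block of `P` are
proportional, and representatives of the distinct blocks are linearly independent. -/
def PCompatible {n s k : ℕ} (P : IdxPartition s k) (v : Fin s → Fin n → ℂ) : Prop :=
  (∀ p, v p ≠ 0) ∧
  (∀ i, ∀ p ∈ P.block i, ∀ q ∈ P.block i, ∃ c : ℂ, v p = c • v q) ∧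
  (∀ r : Fin k → Fin s, (∀ i, r i ∈ P.block i) → LinearIndependent ℂ (fun i => v (r i)))

/-- The multicone over `W_s`: tuples `(A, v_1, …, v_s)` where each `v_i` is an eigenvector of
the (nonzero) matrix `A`. -/
def Wcone (n s : ℕ) : Set (MIdx n s → ℂ) :=
  {x | matPart x ≠ 0 ∧ ∀ i, IsEigenvector (toMat (matPart x)) (vecPart x i)}

/-- The multicone over `W_{s,P}`: the Zariski closure of the set of tuples in `W_s` whose
vector part is `P`-compatible. -/
def WsPcone (n : ℕ) {s k : ℕ} (P : IdxPartition s k) : Set (MIdx n s → ℂ) :=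
  zClosure {x | x ∈ Wcone n s ∧ PCompatible P (fun i => vecPart x i)}

/-! ## Multidegrees -/

/-- Parameter space for a multiprojective slice of multidegree type `γ`. -/
abbrev MSliceParam (n s : ℕ) (γ : Fin (s + 1) → ℕ) : Type :=
  (Fin (n ^ 2 - γ 0) × Option (Fin n × Fin n)) ⊕ ((Σ j : Fin s, Fin (n - γ j.succ)) × Option (Fin n))

/-- The multiprojective affine-linear slice with parameters `a`: it cuts the matrix factor by
`n² - γ 0` affine-linear equations and the `j`-th vector factor by `n - γ (j+1)` affine-linear
equations. -/
def mSlice {n s : ℕ} (γ : Fin (s + 1) → ℕ) (a : MSliceParam n s γ → ℂ) :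
    Set (MIdx n s → ℂ) :=
  {x | (∀ r : Fin (n ^ 2 - γ 0),
          a (Sum.inl (r, none)) +
            ∑ ij : Fin n × Fin n, a (Sum.inl (r, some ij)) * x (Sum.inl ij) = 0) ∧
       (∀ j : Fin s, ∀ r : Fin (n - γ j.succ),
          a (Sum.inr (⟨j, r⟩, none)) +
            ∑ k : Fin n, a (Sum.inr (⟨j, r⟩, some k)) * x (Sum.inr (j, k)) = 0)}

/-- `hasMD W γ δ` : the coefficient of the monomial `h_0^{γ 0} h_1^{γ 1} ⋯ h_s^{γ s}` in the
Chow class of the multiprojective variety with multicone `W ⊆ ℂ^{n²} × (ℂ^n)^s` equals `δ`: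
a generic multiprojective slice of type `γ` meets `W` in exactly `δ` points. -/
def hasMD {n s : ℕ} (W : Set (MIdx n s → ℂ)) (γ : Fin (s + 1) → ℕ) (δ : ℕ) : Prop :=
  ∃ U : Set (MSliceParam n s γ → ℂ), zOpen U ∧ zDense U ∧
    ∀ a ∈ U, (W ∩ mSlice γ a).ncard = δ

/-- The exponent vector of the monomial `h_0 · h_1^{n-1} ⋯ h_i^{n-2} ⋯ h_s^{n-1}`. -/
def specialExp (n s : ℕ) (i : Fin s) : Fin (s + 1) → ℕ :=
  fun j => if j = 0 then 1 else if j = i.succ then n - 2 else n - 1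

/-- `γ` lies in the box of admissible exponents of the Chow ring of `ℙ^{n²-1} × (ℙ^{n-1})^s`. -/
def inBox (n s : ℕ) (γ : Fin (s + 1) → ℕ) : Prop :=
  γ 0 < n ^ 2 ∧ ∀ j : Fin s, γ j.succ < n

/-- `representsClass W c q` : the polynomial `q` represents the Chow class of the
multiprojective variety with multicone `W`, of codimension `c`: its coefficients in the
admissible box in degree `c` are the multidegrees of `W`, and all other coefficients vanish. -/
def representsClass {n s : ℕ} (W : Set (MIdx n s → ℂ)) (c : ℕ)
    (q : MvPolynomial (Fin (s + 1)) ℤ) : Prop :=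
  (∀ γ : Fin (s + 1) → ℕ, inBox n s γ → (∑ j, γ j) = c →
      ∃ δ : ℕ, q.coeff (Finsupp.equivFunOnFinite.symm γ) = (δ : ℤ) ∧ hasMD W γ δ) ∧
  (∀ γ : Fin (s + 1) → ℕ, ¬ (inBox n s γ ∧ (∑ j, γ j) = c) →
      q.coeff (Finsupp.equivFunOnFinite.symm γ) = 0)

/-! ## The Chow ring of `ℙ^{n²-1} × (ℙ^{n-1})^s` -/

/-- The defining ideal of the Chow ring `ℤ[h_0, …, h_s]/(h_0^{n²}, h_1^n, …, h_s^n)`. -/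
def chowIdeal (n s : ℕ) : Ideal (MvPolynomial (Fin (s + 1)) ℤ) :=
  Ideal.span ({MvPolynomial.X 0 ^ n ^ 2} ∪
    Set.range fun j : Fin s => MvPolynomial.X j.succ ^ n)

/-- The Chow ring `A^*(ℙ_s) = ℤ[h_0, …, h_s]/(h_0^{n²}, h_1^n, …, h_s^n)`. -/
abbrev ChowRing (n s : ℕ) := MvPolynomial (Fin (s + 1)) ℤ ⧸ chowIdeal n s

/-- The variable substitution `h_0 ↦ t_0`, `h_i ↦ t_{q_i}` underlying `φ_P`. -/
def blockVarMap {s k : ℕ} (P : IdxPartition s k) : Fin (k + 1) → Fin (s + 1) :=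
  Fin.cases 0 fun i => (P.rep i).succ

lemma phiP_aux {n s k : ℕ} (P : IdxPartition s k) :
    ∀ a ∈ chowIdeal n k,
      ((Ideal.Quotient.mk (chowIdeal n s)).comp
        (MvPolynomial.rename (R := ℤ) (blockVarMap P)).toRingHom) a = 0 := by
  intro a ha
  rw [RingHom.comp_apply, Ideal.Quotient.eq_zero_iff_mem]
  have hmap : (MvPolynomial.rename (R := ℤ) (blockVarMap P)).toRingHom a ∈
      Ideal.map (MvPolynomial.rename (R := ℤ) (blockVarMap P)).toRingHom
        (chowIdeal n k) :=
    Ideal.mem_map_of_mem _ ha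
  have hle : Ideal.map
      (MvPolynomial.rename (R := ℤ) (blockVarMap P)).toRingHom
      (chowIdeal n k) ≤ chowIdeal n s := by
    rw [chowIdeal, Ideal.map_span, Ideal.span_le]
    rintro q ⟨p, hp, rfl⟩
    rcases hp with hp | ⟨j, rfl⟩
    · rw [Set.mem_singleton_iff] at hp
      subst hp
      simp only [AlgHom.toRingHom_eq_coe, RingHom.coe_coe, map_pow, MvPolynomial.rename_X,
        Fin.cases_zero]
      exact Ideal.subset_span (Or.inl rfl)
    · simp only [AlgHom.toRingHom_eq_coe, RingHom.coe_coe, map_pow, MvPolynomial.rename_X,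
        Fin.cases_succ]
      exact Ideal.subset_span (Or.inr ⟨P.rep j, rfl⟩)
  exact hle hmap

/-- The ring map `φ_P : A^*(ℙ_k) → A^*(ℙ_s)` sending `h_0 ↦ t_0` and `h_i ↦ t_{q_i}`. -/
def phiP (n : ℕ) {s k : ℕ} (P : IdxPartition s k) : ChowRing n k →+* ChowRing n s :=
  Ideal.Quotient.lift (chowIdeal n k)
    ((Ideal.Quotient.mk (chowIdeal n s)).comp
      (MvPolynomial.rename (R := ℤ) (blockVarMap P)).toRingHom)
    (phiP_aux P)



/-! ## Discriminants of characteristic polynomials -/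

/-- `∏_{i<j} (l i - l j)^2` for a list `l`. -/
def listPairProdSq (l : List ℂ) : ℂ :=
  ∏ p ∈ Finset.univ.filter (fun p : Fin l.length × Fin l.length => p.1 < p.2),
    (l.get p.1 - l.get p.2) ^ 2

/-- The product of the squared differences of all pairs of elements of a multiset; applied to
the multiset of roots of a characteristic polynomial this is the discriminant. -/
def pairProdSq (m : Multiset ℂ) : ℂ := listPairProdSq m.toList

/-- The coordinate vector (for the action of the symmetric power `ρ_d`) of the symmetric
product `v_1 ⋯ v_d` of the vectors `v i`: its `σ`-th coordinate is the coefficient of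
`t_1 ⋯ t_d` in `∏_k (∑_i t_i v i k)^{σ_k}`. -/
def symProdVec {n d : ℕ} (v : Fin d → Fin n → ℂ) : MonIdx n d → ℂ := fun σ =>
  MvPolynomial.coeff (Finsupp.equivFunOnFinite.symm fun _ : Fin d => 1)
    (∏ k : Fin n, (∑ i : Fin d, MvPolynomial.C (v i k) * MvPolynomial.X i) ^ (monExp σ k))

/-!
Away from tuples with a zero vector, `W_{s,P}` is the image of `W̃_k` under the diagonal embedding
`ℙ_k → ℙ_s` repeating the `i`-th vector along the `i`-th block. The formula is therefore the
push-forward along this embedding, since the diagonal of `ℙ^{n-1} × ℙ^{n-1}` has class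
`∑ r, t_q ^ (n-1-r) * t_p ^ r`.

On multidegrees this reads as follows. A slice of type `γ` imposes `n - γ_p` affine-linear equations
on the `p`-th vector. Eliminating all constant terms but one leaves `n - 1 - γ_p` linear forms, the
codegree of `γ` on this factor, and a single equation which only fixes the scaling of the vector.
On the diagonal the forms along a block are all imposed on the same vector, so that
codegrees add up along blocks: a generic slice of `W_{s,P}` is in bijection with a generic slice of
`W̃_k` if all the sums are less than `n`, and it is empty otherwise, because `n` general linear
forms have only the zero vector in common.
-/

open MvPolynomial Filter

section GenericPoints

variable {ι κ : Type*}

/-- The filter of generic points of affine space: a set belongs to it when it contains the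
complement of a hypersurface. -/
def zariskiGeneric (ι : Type*) : Filter (ι → ℂ) where
  sets := {U | ∃ p : MvPolynomial ι ℂ, p ≠ 0 ∧ ∀ x, eval x p ≠ 0 → x ∈ U}
  univ_sets := ⟨1, one_ne_zero, fun _ _ => trivial⟩
  sets_of_superset := fun ⟨p, hp, hU⟩ hUV => ⟨p, hp, fun x hx => hUV (hU x hx)⟩
  inter_sets := fun ⟨p, hp, hU⟩ ⟨q, hq, hV⟩ => ⟨p * q, mul_ne_zero hp hq, fun x hx => by
    rw [map_mul, mul_ne_zero_iff] at hx
    exact ⟨hU x hx.1, hV x hx.2⟩⟩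

lemma eventually_zariskiGeneric_iff {Q : (ι → ℂ) → Prop} :
    (∀ᶠ x in zariskiGeneric ι, Q x) ↔
      ∃ p : MvPolynomial ι ℂ, p ≠ 0 ∧ ∀ x, eval x p ≠ 0 → Q x :=
  Iff.rfl

lemma eventually_eval_ne_zero {p : MvPolynomial ι ℂ} (hp : p ≠ 0) :
    ∀ᶠ x in zariskiGeneric ι, eval x p ≠ 0 :=
  eventually_zariskiGeneric_iff.2 ⟨p, hp, fun _ => id⟩

lemma exists_eval_ne_zero {p : MvPolynomial ι ℂ} (hp : p ≠ 0) : ∃ x, eval x p ≠ 0 := by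
  by_contra! h
  exact hp (MvPolynomial.funext fun x => by rw [h x, map_zero])

instance zariskiGeneric_neBot : (zariskiGeneric ι).NeBot where
  ne' h := by
    have hbot : ∀ᶠ _x in zariskiGeneric ι, False := by rw [h]; exact eventually_bot
    obtain ⟨p, hp, hfalse⟩ := eventually_zariskiGeneric_iff.1 hbot
    obtain ⟨x, hx⟩ := exists_eval_ne_zero hp
    exact hfalse x hx

lemma isTopologicalBasis_zTop (ι : Type*) :
    @TopologicalSpace.IsTopologicalBasis _ (zTop ι)
      {U | ∃ p : MvPolynomial ι ℂ, U = {x | eval x p ≠ 0}} := by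
  let _ := zTop ι
  refine ⟨?_, Set.eq_univ_of_forall fun x => ⟨_, ⟨1, rfl⟩, by simp⟩, rfl⟩
  rintro _ ⟨p, rfl⟩ _ ⟨q, rfl⟩ x ⟨hpx, hqx⟩
  refine ⟨_, ⟨p * q, rfl⟩, ?_, fun y hy => ?_⟩
  · rw [Set.mem_ofPred_eq, map_mul]
    exact mul_ne_zero hpx hqx
  · rw [Set.mem_ofPred_eq, map_mul] at hy
    exact ⟨left_ne_zero_of_mul hy, right_ne_zero_of_mul hy⟩

lemma zOpen.mem_zariskiGeneric {U : Set (ι → ℂ)} (hU : zOpen U) (hne : U.Nonempty) :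
    U ∈ zariskiGeneric ι := by
  let _ := zTop ι
  obtain ⟨x, hx⟩ := hne
  obtain ⟨_, ⟨p, rfl⟩, hpx, hpU⟩ := (isTopologicalBasis_zTop ι).exists_subset_of_mem_open hx hU
  refine eventually_zariskiGeneric_iff.2 ⟨p, ?_, hpU⟩
  rintro rfl
  exact hpx (map_zero _)

lemma zDense.nonempty {U : Set (ι → ℂ)} (hU : zDense U) : U.Nonempty :=
  @Dense.nonempty _ (zTop ι) _ _ hU

lemma hasMD.eventually_ncard_eq {n s : ℕ} {W : Set (MIdx n s → ℂ)} {γ : Fin (s + 1) → ℕ} {δ : ℕ}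
    (h : hasMD W γ δ) :
    ∀ᶠ a in zariskiGeneric (MSliceParam n s γ), (W ∩ mSlice γ a).ncard = δ := by
  obtain ⟨U, hopen, hdense, hU⟩ := h
  exact mem_of_superset (hopen.mem_zariskiGeneric hdense.nonempty) hU

lemma mem_zClosure_iff {S : Set (ι → ℂ)} {x : ι → ℂ} :
    x ∈ zClosure S ↔ ∀ p : MvPolynomial ι ℂ, (∀ y ∈ S, eval y p = 0) → eval x p = 0 := by
  let _ := zTop ι
  rw [zClosure, (isTopologicalBasis_zTop ι).mem_closure_iff]
  constructor
  · intro h p hp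
    by_contra hx
    obtain ⟨y, hy, hyS⟩ := h _ ⟨p, rfl⟩ hx
    exact hy (hp y hyS)
  · rintro h _ ⟨p, rfl⟩ hx
    by_contra! hempty
    refine hx (h p fun y hyS => ?_)
    by_contra hy
    exact hempty.subset ⟨hy, hyS⟩

/-- Maps between affine spaces all of whose coordinates are given by polynomials. -/
def IsPolynomialMap (F : (κ → ℂ) → ι → ℂ) : Prop :=
  ∀ i, ∃ q : MvPolynomial κ ℂ, ∀ t, eval t q = F t i

namespace IsPolynomialMap

variable {F : (κ → ℂ) → ι → ℂ}

lemma exists_eval_comp (hF : IsPolynomialMap F) (p : MvPolynomial ι ℂ) :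
    ∃ q : MvPolynomial κ ℂ, ∀ t, eval t q = eval (F t) p := by
  choose f hf using hF
  refine ⟨bind₁ f p, fun t => ?_⟩
  rw [← _root_.funext (hf · t)]
  exact eval₂Hom_bind₁ (RingHom.id ℂ) t f p

lemma mapsTo_zClosure (hF : IsPolynomialMap F) {S : Set (κ → ℂ)} {T : Set (ι → ℂ)}
    (h : Set.MapsTo F S T) : Set.MapsTo F (zClosure S) (zClosure T) := by
  intro x hx
  rw [mem_zClosure_iff] at hx ⊢
  intro p hp
  obtain ⟨q, hq⟩ := hF.exists_eval_comp p
  rw [← hq]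
  exact hx q fun y hy => by rw [hq, hp _ (h hy)]

lemma eventually_eval_ne_zero (hF : IsPolynomialMap F) {p : MvPolynomial ι ℂ} {x : κ → ℂ}
    (hx : eval (F x) p ≠ 0) : ∀ᶠ t in zariskiGeneric κ, eval (F t) p ≠ 0 := by
  obtain ⟨q, hq⟩ := hF.exists_eval_comp p
  rw [← hq] at hx
  refine eventually_zariskiGeneric_iff.2 ⟨q, ?_, fun t ht => hq t ▸ ht⟩
  rintro rfl
  exact hx (map_zero _)

lemma tendsto_zariskiGeneric (hF : IsPolynomialMap F)
    (hdominant : ∃ᶠ y in zariskiGeneric ι, y ∈ Set.range F) :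
    Tendsto F (zariskiGeneric κ) (zariskiGeneric ι) := by
  rintro U ⟨p, hp, hU⟩
  obtain ⟨_, ⟨x, rfl⟩, hx⟩ :=
    (hdominant.and_eventually (_root_.eventually_eval_ne_zero hp)).exists
  exact (hF.eventually_eval_ne_zero hx).mono fun t => hU (F t)

end IsPolynomialMap

lemma isPolynomialMap_extend_left {f : ι → κ} (hf : f.Injective) (x : κ → ℂ) :
    IsPolynomialMap fun a : ι → ℂ => Function.extend f a x := by
  intro j
  by_cases h : ∃ i, f i = j
  · obtain ⟨i, rfl⟩ := h
    exact ⟨X i, fun a => by simp only [eval_X, hf.extend_apply]⟩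
  · exact ⟨C (x j), fun a => by simp only [eval_C, Function.extend_apply' _ _ _ h]⟩

lemma isPolynomialMap_extend_right {f : ι → κ} (hf : f.Injective) (a : ι → ℂ) :
    IsPolynomialMap fun u : κ → ℂ => Function.extend f a u := by
  intro j
  by_cases h : ∃ i, f i = j
  · obtain ⟨i, rfl⟩ := h
    exact ⟨C (a i), fun u => by simp only [eval_C, hf.extend_apply]⟩
  · exact ⟨X j, fun u => by simp only [eval_X, Function.extend_apply' _ _ _ h]⟩

lemma extend_comp_self {γ : Type*} {f : ι → κ} (hf : f.Injective) (x : κ → γ) :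
    Function.extend f (x ∘ f) x = x :=
  _root_.funext fun j => by
    by_cases h : ∃ i, f i = j
    · obtain ⟨i, rfl⟩ := h
      exact hf.extend_apply _ _ i
    · exact Function.extend_apply' _ _ _ h

lemma eventually_eventually_extend {f : ι → κ} (hf : f.Injective) {Q : (κ → ℂ) → Prop}
    (hQ : ∀ᶠ t in zariskiGeneric κ, Q t) :
    ∀ᶠ a in zariskiGeneric ι, ∀ᶠ u in zariskiGeneric κ, Q (Function.extend f a u) := by
  obtain ⟨p, hp, hpQ⟩ := eventually_zariskiGeneric_iff.1 hQ
  obtain ⟨x, hx⟩ := exists_eval_ne_zero hp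
  have hx' : eval (Function.extend f (x ∘ f) x) p ≠ 0 := by
    rwa [extend_comp_self hf]
  filter_upwards [(isPolynomialMap_extend_left hf x).eventually_eval_ne_zero hx'] with a ha
  exact ((isPolynomialMap_extend_right hf a).eventually_eval_ne_zero ha).mono fun u => hpQ _

lemma map_comp_zariskiGeneric {f : ι → κ} (hf : f.Injective) :
    map (· ∘ f) (zariskiGeneric κ) = zariskiGeneric ι := by
  refine le_antisymm (IsPolynomialMap.tendsto_zariskiGeneric (fun i => ⟨X (f i), fun t => by simp⟩)
    (Frequently.of_forall fun y => hf.surjective_comp_right y)) fun U hU => ?_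
  filter_upwards [eventually_eventually_extend hf hU] with a ha
  obtain ⟨u, hu⟩ := ha.exists
  rwa [Function.extend_comp hf] at hu

lemma dense_setOf_eval_ne_zero {p : MvPolynomial ι ℂ} (hp : p ≠ 0) :
    Dense {x : ι → ℂ | eval x p ≠ 0} := by
  classical
  refine dense_iff_inter_open.2 fun U hU ⟨x, hx⟩ => ?_
  obtain ⟨I, u, hu, hIU⟩ := isOpen_pi_iff.1 hU x hx
  by_contra! hempty
  refine hp (funext_set (fun i => if i ∈ I then u i else Set.univ) (fun i => ?_) fun y hy => ?_)
  · split_ifs with hi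
    · exact infinite_of_mem_nhds (x i) ((hu i hi).1.mem_nhds (hu i hi).2)
    · exact Set.infinite_univ
  · rw [map_zero]
    by_contra hne
    refine hempty.subset ⟨hIU fun i hi => ?_, hne⟩
    simpa only [if_pos (Finset.mem_coe.1 hi)] using hy i trivial

lemma residual_le_zariskiGeneric : residual (ι → ℂ) ≤ zariskiGeneric ι := by
  rintro U ⟨p, hp, hU⟩
  refine mem_of_superset (residual_of_dense_open ?_ (dense_setOf_eval_ne_zero hp)) hU
  exact isOpen_ne_fun (continuous_eval p) continuous_const

lemma eventually_ncard_sep_eq {α β : Type*} {l : Filter β} [CountableInterFilter l] {S : Set α}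
    {Q : α → β → Prop} (h : ∀ x ∈ S, ∀ᶠ u in l, Q x u) :
    ∀ᶠ u in l, {x ∈ S | Q x u}.ncard = S.ncard := by
  by_cases hS : S.Finite
  · filter_upwards [(eventually_countable_ball hS.countable).2 h] with u hu
    rw [Set.sep_eq_self_iff_mem_true.2 hu]
  · obtain ⟨T, hTS, hTc, hT⟩ := Set.Infinite.exists_subset_countable_infinite hS
    filter_upwards [(eventually_countable_ball hTc).2 fun x hx => h x (hTS hx)] with u hu
    have hinf : {x ∈ S | Q x u}.Infinite := hT.mono fun x hx => ⟨hTS hx, hu x hx⟩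
    rw [hinf.ncard, Set.Infinite.ncard hS]

end GenericPoints

section DiagonalCones

variable {n s k : ℕ}

/-- The index of the block containing `p`. -/
def IdxPartition.blockOf (P : IdxPartition s k) (p : Fin s) : Fin k :=
  (P.cover p).choose

lemma IdxPartition.mem_block_iff (P : IdxPartition s k) {p : Fin s} {i : Fin k} :
    p ∈ P.block i ↔ P.blockOf p = i := by
  have hp : p ∈ P.block (P.blockOf p) := (P.cover p).choose_spec
  refine ⟨fun h => ?_, fun h => h ▸ hp⟩
  by_contra hne
  exact Finset.disjoint_left.1 (P.disj _ _ hne) hp h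

lemma IdxPartition.rep_mem_block (P : IdxPartition s k) (i : Fin k) : P.rep i ∈ P.block i :=
  Finset.min'_mem _ _

@[simp]
lemma IdxPartition.blockOf_rep (P : IdxPartition s k) (i : Fin k) : P.blockOf (P.rep i) = i :=
  P.mem_block_iff.1 (P.rep_mem_block i)

lemma IdxPartition.rep_injective (P : IdxPartition s k) : Function.Injective P.rep :=
  Function.LeftInverse.injective P.blockOf_rep

/-- Restriction of a tuple to the representatives of the blocks. -/
def projRep (P : IdxPartition s k) (x : MIdx n s → ℂ) : MIdx n k → ℂ :=
  Sum.elim (matPart x) fun il => vecPart x (P.rep il.1) il.2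

/-- The tuple on the diagonal of `P` over `y`, with the `p`-th vector scaled by `c p`. -/
def liftRep (P : IdxPartition s k) (c : Fin s → ℂ) (y : MIdx n k → ℂ) : MIdx n s → ℂ :=
  Sum.elim (matPart y) fun pl => (c pl.1 • vecPart y (P.blockOf pl.1)) pl.2

lemma vecPart_projRep (P : IdxPartition s k) (x : MIdx n s → ℂ) (i : Fin k) :
    vecPart (projRep P x) i = vecPart x (P.rep i) :=
  rfl

lemma vecPart_liftRep (P : IdxPartition s k) (c : Fin s → ℂ) (y : MIdx n k → ℂ) (p : Fin s) :
    vecPart (liftRep P c y) p = c p • vecPart y (P.blockOf p) :=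
  rfl

/-- `W` is, away from the tuples with a zero vector, the multicone over the image of the variety
of `V` under the diagonal embedding repeating the `i`-th vector along the `i`-th block of `P`. -/
def IsDiagonalCone (P : IdxPartition s k) (V : Set (MIdx n k → ℂ)) (W : Set (MIdx n s → ℂ)) :
    Prop :=
  ∀ x, (∀ p, vecPart x p ≠ 0) →
    (x ∈ W ↔ projRep P x ∈ V ∧ ∀ p, ∃ c : ℂ, vecPart x p = c • vecPart x (P.rep (P.blockOf p)))

lemma ext_matPart_vecPart {x y : MIdx n s → ℂ} (hmat : matPart x = matPart y)
    (hvec : ∀ p, vecPart x p = vecPart y p) : x = y := by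
  ext (ij | pl)
  · exact congrFun hmat ij
  · exact congrFun (hvec pl.1) pl.2

lemma projRep_liftRep (P : IdxPartition s k) {c : Fin s → ℂ} {y : MIdx n k → ℂ}
    (hc : ∀ i, c (P.rep i) = 1) : projRep P (liftRep P c y) = y := by
  refine ext_matPart_vecPart rfl fun i => ?_
  rw [vecPart_projRep, vecPart_liftRep, P.blockOf_rep, hc, one_smul]

lemma liftRep_projRep (P : IdxPartition s k) {c : Fin s → ℂ} {x : MIdx n s → ℂ}
    (hc : ∀ p, vecPart x p = c p • vecPart x (P.rep (P.blockOf p))) :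
    liftRep P c (projRep P x) = x :=
  ext_matPart_vecPart rfl fun p => (hc p).symm

lemma isPolynomialMap_projRep (P : IdxPartition s k) :
    IsPolynomialMap (projRep P : (MIdx n s → ℂ) → MIdx n k → ℂ)
  | Sum.inl ij => ⟨X (Sum.inl ij), fun _ => eval_X _⟩
  | Sum.inr il => ⟨X (Sum.inr (P.rep il.1, il.2)), fun _ => eval_X _⟩

lemma isPolynomialMap_liftRep (P : IdxPartition s k) (c : Fin s → ℂ) :
    IsPolynomialMap (liftRep P c : (MIdx n k → ℂ) → MIdx n s → ℂ)
  | Sum.inl ij => ⟨X (Sum.inl ij), fun _ => eval_X _⟩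
  | Sum.inr pl => ⟨C (c pl.1) * X (Sum.inr (P.blockOf pl.1, pl.2)), fun _ => by
      rw [map_mul, eval_C, eval_X]; rfl⟩

lemma projRep_mem_WsPcone (P : IdxPartition s k) {x : MIdx n s → ℂ} (hx : x ∈ WsPcone n P) :
    projRep P x ∈ WsPcone n (singletonPartition k) := by
  refine (isPolynomialMap_projRep P).mapsTo_zClosure ?_ hx
  rintro y ⟨⟨hmat, heigen⟩, hne, -, hindep⟩
  refine ⟨⟨hmat, fun i => heigen (P.rep i)⟩, fun i => hne (P.rep i), ?_, fun r hr => ?_⟩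
  · intro i p hp q hq
    rw [Finset.mem_singleton.1 hp, Finset.mem_singleton.1 hq]
    exact ⟨1, (one_smul ℂ _).symm⟩
  · obtain rfl : r = id := funext fun i => Finset.mem_singleton.1 (hr i)
    exact hindep P.rep P.rep_mem_block

lemma liftRep_mem_WsPcone (P : IdxPartition s k) {c : Fin s → ℂ} (hc : ∀ p, c p ≠ 0)
    {y : MIdx n k → ℂ} (hy : y ∈ WsPcone n (singletonPartition k)) :
    liftRep P c y ∈ WsPcone n P := by
  refine (isPolynomialMap_liftRep P c).mapsTo_zClosure ?_ hy
  rintro y ⟨⟨hmat, heigen⟩, hne, -, hindep⟩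
  refine ⟨⟨hmat, fun p => ?_⟩, fun p => smul_ne_zero (hc p) (hne (P.blockOf p)), ?_, fun r hr => ?_⟩
  · obtain ⟨hv, lam, hlam⟩ := heigen (P.blockOf p)
    refine ⟨smul_ne_zero (hc p) hv, lam, ?_⟩
    rw [vecPart_liftRep, smul_comm, ← hlam, ← Matrix.mulVec_smul]
    rfl
  · intro i p hp q hq
    refine ⟨c p / c q, ?_⟩
    beta_reduce
    rw [vecPart_liftRep, vecPart_liftRep, P.mem_block_iff.1 hp, P.mem_block_iff.1 hq, smul_smul,
      div_mul_cancel₀ _ (hc q)]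
  · have hlift : (fun i => vecPart (liftRep P c y) (r i)) =
        (fun i => Units.mk0 (c (r i)) (hc _)) • fun i => vecPart y i := by
      ext1 i
      rw [vecPart_liftRep, P.mem_block_iff.1 (hr i)]
      rfl
    rw [hlift]
    exact (hindep id fun i => Finset.mem_singleton_self i).units_smul _

lemma exists_eq_smul_of_mul_eq_mul {ι K : Type*} [Field K] {v w : ι → K} (hw : w ≠ 0)
    (h : ∀ l j, v l * w j = v j * w l) : ∃ c : K, v = c • w := by
  obtain ⟨j, hj⟩ := Function.ne_iff.1 hw
  refine ⟨v j / w j, funext fun l => ?_⟩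
  rw [Pi.smul_apply, smul_eq_mul, div_mul_eq_mul_div, eq_div_iff hj, h]

lemma WsPcone_vecPart_mul_eq_mul (P : IdxPartition s k) {x : MIdx n s → ℂ}
    (hx : x ∈ WsPcone n P) (p : Fin s) (l j : Fin n) :
    vecPart x p l * vecPart x (P.rep (P.blockOf p)) j =
      vecPart x p j * vecPart x (P.rep (P.blockOf p)) l := by
  have hminor := mem_zClosure_iff.1 hx
    (X (Sum.inr (p, l)) * X (Sum.inr (P.rep (P.blockOf p), j)) -
      X (Sum.inr (p, j)) * X (Sum.inr (P.rep (P.blockOf p), l)))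
  simp only [map_sub, map_mul, eval_X, sub_eq_zero] at hminor
  refine hminor fun y ⟨_, _, hprop, _⟩ => ?_
  obtain ⟨c, hc⟩ := hprop _ p (P.mem_block_iff.2 rfl) _ (P.rep_mem_block _)
  have hl := congrFun hc l
  have hj := congrFun hc j
  simp only [vecPart, Pi.smul_apply, smul_eq_mul] at hl hj
  rw [hl, hj]
  ring

lemma isDiagonalCone_WsPcone (n : ℕ) (P : IdxPartition s k) :
    IsDiagonalCone P (WsPcone n (singletonPartition k)) (WsPcone n P) := by
  refine fun x hx => ⟨fun hxW => ⟨projRep_mem_WsPcone P hxW, fun p =>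
    exists_eq_smul_of_mul_eq_mul (hx _) (WsPcone_vecPart_mul_eq_mul P hxW p)⟩, ?_⟩
  rintro ⟨hxV, hprop⟩
  choose c hc using hprop
  rw [← liftRep_projRep P hc]
  refine liftRep_mem_WsPcone P (fun p hcp => hx p ?_) hxV
  rw [hc, hcp, zero_smul]

end DiagonalCones

section NormalizedSlices

variable {n s R : ℕ} {J : Type*}

/-- The coefficients of the linear part of an affine-linear form, whose constant term is
`a none`. -/
def linPart {ι : Type*} (a : Option ι → ℂ) : ι → ℂ :=
  fun i => a (some i)

/-- The value of an affine-linear form at `v`. -/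
def affEval {ι : Type*} [Fintype ι] (a : Option ι → ℂ) (v : ι → ℂ) : ℂ :=
  a none + linPart a ⬝ᵥ v

/-- The linear form with coefficients `l`, as an affine-linear form. -/
def linToAff {ι : Type*} (l : ι → ℂ) (o : Option ι) : ℂ :=
  o.elim 0 l

lemma affEval_linToAff_add_smul {ι : Type*} [Fintype ι] (l : ι → ℂ) (z : ℂ) (a : Option ι → ℂ)
    (v : ι → ℂ) : affEval (linToAff l + z • a) v = l ⬝ᵥ v + z * affEval a v := by
  have hlin : linPart (linToAff l + z • a) = l + z • linPart a := rfl
  rw [affEval, affEval, hlin, add_dotProduct, smul_dotProduct, smul_eq_mul]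
  change 0 + z * a none + _ = _
  ring

/-- Parameters of the normalized slices of the multicone over `ℙ^{n²-1} × (ℙ^{n-1})^s`: `R`
affine-linear forms on the matrix factor, one affine-linear form on each vector factor, and a
family of linear forms on vector factors indexed by `J`. -/
abbrev NormalizedSliceParam (n s R : ℕ) (J : Type*) : Type _ :=
  (Fin R × Option (Fin n × Fin n)) ⊕ (Fin s × Option (Fin n)) ⊕ (J × Fin n)

/-- The `r`-th affine-linear form on the matrix factor. -/
def matForm (t : NormalizedSliceParam n s R J → ℂ) (r : Fin R) : Option (Fin n × Fin n) → ℂ :=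
  fun o => t (Sum.inl (r, o))

/-- The affine-linear form normalizing the `p`-th vector. -/
def normForm (t : NormalizedSliceParam n s R J → ℂ) (p : Fin s) : Option (Fin n) → ℂ :=
  fun o => t (Sum.inr (Sum.inl (p, o)))

/-- The linear form indexed by `j`. -/
def linForm (t : NormalizedSliceParam n s R J → ℂ) (j : J) : Fin n → ℂ :=
  fun l => t (Sum.inr (Sum.inr (j, l)))

/-- The slice cut out by the forms in `t`, where the `j`-th linear form is imposed on the vector
with index `π j`. Among the equations on a given vector only one is inhomogeneous, so that it
fixes the scaling of this vector. -/
def normalizedSlice (π : J → Fin s) (t : NormalizedSliceParam n s R J → ℂ) :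
    Set (MIdx n s → ℂ) :=
  {x | (∀ r, affEval (matForm t r) (matPart x) = 0) ∧
    (∀ p, affEval (normForm t p) (vecPart x p) = 0) ∧ ∀ j, linForm t j ⬝ᵥ vecPart x (π j) = 0}

/-- The equations on the `p`-th vector: its normalization and, for each linear form `j` imposed on
it, the sum of this form and `z j` times the normalization, where `z` is the second component of
`tz`. -/
def combinedRow {π : J → Fin s} (tz : NormalizedSliceParam n s R J ⊕ J → ℂ) (p : Fin s) :
    Option {j // π j = p} → Option (Fin n) → ℂ
  | none => normForm (tz ∘ Sum.inl) p
  | some j => linToAff (linForm (tz ∘ Sum.inl) j) + tz (Sum.inr j) • normForm (tz ∘ Sum.inl) p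

/-- The slice parameters with the same forms on the matrix factor and with the rows `combinedRow`,
numbered by `e`, on the vector factors. -/
def combineRows {γ : Fin (s + 1) → ℕ} {π : J → Fin s}
    (e : ∀ p, Option {j // π j = p} ≃ Fin (n - γ p.succ))
    (tz : NormalizedSliceParam n s (n ^ 2 - γ 0) J ⊕ J → ℂ) : MSliceParam n s γ → ℂ
  | Sum.inl y => tz (Sum.inl (Sum.inl y))
  | Sum.inr (⟨p, r⟩, o) => combinedRow tz p ((e p).symm r) o

variable {γ : Fin (s + 1) → ℕ} {π : J → Fin s}

lemma isPolynomialMap_combineRows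
    (e : ∀ p, Option {j // π j = p} ≃ Fin (n - γ p.succ)) :
    IsPolynomialMap (combineRows e)
  | Sum.inl y => ⟨X (Sum.inl (Sum.inl y)), fun _ => eval_X _⟩
  | Sum.inr (⟨p, r⟩, o) => by
    simp only [combineRows]
    rcases (e p).symm r with _ | j
    · exact ⟨X (Sum.inl (Sum.inr (Sum.inl (p, o)))), fun _ => eval_X _⟩
    · obtain ⟨q, hq⟩ : ∃ q : MvPolynomial _ ℂ,
          ∀ tz : NormalizedSliceParam n s (n ^ 2 - γ 0) J ⊕ J → ℂ,
            eval tz q = linToAff (linForm (tz ∘ Sum.inl) j) o :=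
        match o with
        | none => ⟨0, fun _ => map_zero _⟩
        | some l => ⟨X (Sum.inl (Sum.inr (Sum.inr (j, l)))), fun _ => eval_X _⟩
      refine ⟨q + X (Sum.inr j.1) * X (Sum.inl (Sum.inr (Sum.inl (p, o)))), fun tz => ?_⟩
      rw [map_add, map_mul, eval_X, eval_X, hq]
      rfl

lemma mem_range_combineRows (e : ∀ p, Option {j // π j = p} ≃ Fin (n - γ p.succ))
    {a : MSliceParam n s γ → ℂ} (ha : ∀ p, a (Sum.inr (⟨p, e p none⟩, none)) ≠ 0) :
    a ∈ Set.range (combineRows e) := by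
  let nrm (p : Fin s) (o : Option (Fin n)) : ℂ := a (Sum.inr (⟨p, e p none⟩, o))
  let row (j : J) (o : Option (Fin n)) : ℂ := a (Sum.inr (⟨π j, e (π j) (some ⟨j, rfl⟩)⟩, o))
  let z (j : J) : ℂ := row j none / nrm (π j) none
  let lin (j : J) (l : Fin n) : ℂ := row j (some l) - z j * nrm (π j) (some l)
  refine ⟨Sum.elim (Sum.elim (a ∘ Sum.inl) (Sum.elim (fun po => nrm po.1 po.2)
    fun jl => lin jl.1 jl.2)) z, ?_⟩
  ext (y | ⟨⟨p, r⟩, o⟩)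
  · rfl
  · obtain ⟨o', rfl⟩ := (e p).surjective r
    simp only [combineRows, Equiv.symm_apply_apply]
    rcases o' with _ | ⟨j, rfl⟩
    · rfl
    · rcases o with _ | l
      · change 0 + row j none / nrm (π j) none * nrm (π j) none = row j none
        rw [zero_add, div_mul_cancel₀ _ (ha (π j))]
      · exact sub_add_cancel _ _

lemma mSlice_combineRows (e : ∀ p, Option {j // π j = p} ≃ Fin (n - γ p.succ))
    (tz : NormalizedSliceParam n s (n ^ 2 - γ 0) J ⊕ J → ℂ) :
    mSlice γ (combineRows e tz) = normalizedSlice π (tz ∘ Sum.inl) := by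
  ext x
  refine and_congr Iff.rfl ?_
  change (∀ p r, affEval (combinedRow tz p ((e p).symm r)) (vecPart x p) = 0) ↔ _
  simp only [← (e _).forall_congr_right, Option.forall, Equiv.symm_apply_apply, combinedRow,
    affEval_linToAff_add_smul]
  constructor
  · refine fun h => ⟨fun p => (h p).1, fun j => ?_⟩
    simpa only [(h (π j)).1, mul_zero, add_zero] using (h (π j)).2 ⟨j, rfl⟩
  · rintro ⟨hnorm, hlin⟩ p
    refine ⟨hnorm p, ?_⟩
    rintro ⟨j, rfl⟩
    rw [hlin, hnorm, mul_zero, add_zero]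

lemma hasMD.eventually_ncard_normalizedSlice {W : Set (MIdx n s → ℂ)} {δ : ℕ}
    (h : hasMD W γ δ) (e : ∀ p, Option {j // π j = p} ≃ Fin (n - γ p.succ)) :
    ∀ᶠ t in zariskiGeneric (NormalizedSliceParam n s (n ^ 2 - γ 0) J),
      (W ∩ normalizedSlice π t).ncard = δ := by
  have hdominant : ∀ᶠ a in zariskiGeneric (MSliceParam n s γ), a ∈ Set.range (combineRows e) := by
    have hne : ∀ᶠ a in zariskiGeneric (MSliceParam n s γ),
        ∀ p, a (Sum.inr (⟨p, e p none⟩, none)) ≠ 0 :=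
      eventually_all.2 fun p => by
        simpa only [eval_X] using eventually_eval_ne_zero (X_ne_zero (R := ℂ) _)
    exact hne.mono fun a => mem_range_combineRows e
  have hcombine := ((isPolynomialMap_combineRows e).tendsto_zariskiGeneric
    hdominant.frequently).eventually h.eventually_ncard_eq
  simp only [mSlice_combineRows] at hcombine
  rwa [← map_comp_zariskiGeneric Sum.inl_injective]

end NormalizedSlices

section DiagonalSlices

variable {n s k R : ℕ} {J : Type*}

/-- The scalar `c` for which the affine-linear form `a` vanishes at `c • w`. It has the junk value
`0` when the linear part of `a` vanishes at `w`. -/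
def normalizingScalar {ι : Type*} [Fintype ι] (a : Option ι → ℂ) (w : ι → ℂ) : ℂ :=
  -a none / (linPart a ⬝ᵥ w)

lemma affEval_normalizingScalar_smul {ι : Type*} [Fintype ι] {a : Option ι → ℂ} {w : ι → ℂ}
    (hw : linPart a ⬝ᵥ w ≠ 0) : affEval a (normalizingScalar a w • w) = 0 := by
  rw [affEval, normalizingScalar, dotProduct_smul, smul_eq_mul, div_mul_cancel₀ _ hw,
    add_neg_cancel]

lemma linPart_dotProduct_ne_zero {ι : Type*} [Fintype ι] {a : Option ι → ℂ} {w : ι → ℂ} {c : ℂ}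
    (ha : a none ≠ 0) (h : affEval a (c • w) = 0) : linPart a ⬝ᵥ w ≠ 0 := by
  intro hw
  rw [affEval, dotProduct_smul, hw, smul_zero, add_zero] at h
  exact ha h

lemma eq_normalizingScalar {ι : Type*} [Fintype ι] {a : Option ι → ℂ} {w : ι → ℂ} {c : ℂ}
    (ha : a none ≠ 0) (h : affEval a (c • w) = 0) : c = normalizingScalar a w := by
  rw [normalizingScalar, eq_div_iff (linPart_dotProduct_ne_zero ha h)]
  rw [affEval, dotProduct_smul, smul_eq_mul] at h
  exact eq_neg_of_add_eq_zero_right h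

lemma vecPart_ne_zero_of_mem_normalizedSlice {π : J → Fin s}
    {t : NormalizedSliceParam n s R J → ℂ} {x : MIdx n s → ℂ} {p : Fin s}
    (ht : normForm t p none ≠ 0) (hx : x ∈ normalizedSlice π t) : vecPart x p ≠ 0 := by
  have hnorm := hx.2.1 p
  intro h0
  rw [h0, affEval, dotProduct_zero, add_zero] at hnorm
  exact ht hnorm

/-- The inclusion of the parameters of slices of a variety into the parameters of slices of its
diagonal image, the normalization of the `i`-th vector becoming that of the representative of the
`i`-th block. -/
def repParam (R : ℕ) (J : Type*) (P : IdxPartition s k) :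
    NormalizedSliceParam n k R J → NormalizedSliceParam n s R J :=
  Sum.map id (Sum.map (Prod.map P.rep id) id)

lemma repParam_injective (P : IdxPartition s k) : (repParam (n := n) R J P).Injective :=
  Function.injective_id.sumMap
    ((P.rep_injective.prodMap Function.injective_id).sumMap Function.injective_id)

variable {P : IdxPartition s k} {V : Set (MIdx n k → ℂ)} {W : Set (MIdx n s → ℂ)} {π : J → Fin s}
  {t : NormalizedSliceParam n s R J → ℂ}

lemma IsDiagonalCone.mapsTo_projRep (hVW : IsDiagonalCone P V W)
    (ht : ∀ p, normForm t p none ≠ 0) :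
    Set.MapsTo (projRep P) (W ∩ normalizedSlice π t)
      {y ∈ V ∩ normalizedSlice (P.blockOf ∘ π) (t ∘ repParam R J P) |
        ∀ p, linPart (normForm t p) ⬝ᵥ vecPart y (P.blockOf p) ≠ 0} := by
  rintro x ⟨hxW, hx⟩
  have hne (p : Fin s) : vecPart x p ≠ 0 := vecPart_ne_zero_of_mem_normalizedSlice (ht p) hx
  obtain ⟨hxV, hprop⟩ := (hVW x hne).1 hxW
  refine ⟨⟨hxV, hx.1, fun i => hx.2.1 (P.rep i), fun j => ?_⟩, fun p => ?_⟩
  · obtain ⟨c, hc⟩ := hprop (π j)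
    have hc0 : c ≠ 0 := by
      rintro rfl
      exact hne (π j) (hc.trans (zero_smul ℂ _))
    have hlin := hx.2.2 j
    rw [hc, dotProduct_smul, smul_eq_mul] at hlin
    exact (mul_eq_zero.1 hlin).resolve_left hc0
  · obtain ⟨c, hc⟩ := hprop p
    exact linPart_dotProduct_ne_zero (ht p) (hc ▸ hx.2.1 p)

/-- The tuple on the diagonal of `P` over `y` scaled so as to satisfy the normalizations in `t`. -/
def renormalize (P : IdxPartition s k) (t : NormalizedSliceParam n s R J → ℂ) (y : MIdx n k → ℂ) :
    MIdx n s → ℂ :=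
  liftRep P (fun p => normalizingScalar (normForm t p) (vecPart y (P.blockOf p))) y

lemma vecPart_renormalize (P : IdxPartition s k) (t : NormalizedSliceParam n s R J → ℂ)
    (y : MIdx n k → ℂ) (p : Fin s) :
    vecPart (renormalize P t y) p =
      normalizingScalar (normForm t p) (vecPart y (P.blockOf p)) • vecPart y (P.blockOf p) :=
  rfl

lemma projRep_renormalize (ht : ∀ p, normForm t p none ≠ 0) {y : MIdx n k → ℂ}
    (hy : y ∈ normalizedSlice (P.blockOf ∘ π) (t ∘ repParam R J P)) :
    projRep P (renormalize P t y) = y := by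
  refine projRep_liftRep P fun i => (eq_normalizingScalar (ht (P.rep i)) ?_).symm
  rw [one_smul, P.blockOf_rep]
  exact hy.2.1 i

lemma IsDiagonalCone.mapsTo_renormalize (hVW : IsDiagonalCone P V W)
    (ht : ∀ p, normForm t p none ≠ 0) :
    Set.MapsTo (renormalize P t)
      {y ∈ V ∩ normalizedSlice (P.blockOf ∘ π) (t ∘ repParam R J P) |
        ∀ p, linPart (normForm t p) ⬝ᵥ vecPart y (P.blockOf p) ≠ 0}
      (W ∩ normalizedSlice π t) := by
  rintro y ⟨⟨hyV, hy⟩, hne⟩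
  have hproj := projRep_renormalize ht hy
  have hslice : renormalize P t y ∈ normalizedSlice π t := by
    refine ⟨hy.1, fun p => ?_, fun j => ?_⟩
    · rw [vecPart_renormalize]
      exact affEval_normalizingScalar_smul (hne p)
    · have hlin : linForm t j ⬝ᵥ vecPart y (P.blockOf (π j)) = 0 := hy.2.2 j
      rw [vecPart_renormalize, dotProduct_smul, hlin, smul_zero]
  refine ⟨(hVW _ fun p => vecPart_ne_zero_of_mem_normalizedSlice (ht p) hslice).2 ⟨?_, ?_⟩, hslice⟩
  · rwa [hproj]
  · refine fun p => ⟨normalizingScalar (normForm t p) (vecPart y (P.blockOf p)), ?_⟩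
    rw [← vecPart_projRep, hproj, vecPart_renormalize]

lemma IsDiagonalCone.bijOn_projRep (hVW : IsDiagonalCone P V W)
    (ht : ∀ p, normForm t p none ≠ 0) :
    Set.BijOn (projRep P) (W ∩ normalizedSlice π t)
      {y ∈ V ∩ normalizedSlice (P.blockOf ∘ π) (t ∘ repParam R J P) |
        ∀ p, linPart (normForm t p) ⬝ᵥ vecPart y (P.blockOf p) ≠ 0} := by
  refine Set.InvOn.bijOn (f' := renormalize P t) ⟨fun x hx => ?_, fun y hy => ?_⟩
    (hVW.mapsTo_projRep ht) (hVW.mapsTo_renormalize ht)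
  · obtain ⟨hxW, hx⟩ := hx
    obtain ⟨-, hprop⟩ :=
      (hVW x fun p => vecPart_ne_zero_of_mem_normalizedSlice (ht p) hx).1 hxW
    refine liftRep_projRep P fun p => ?_
    obtain ⟨c, hc⟩ := hprop p
    rw [hc]
    congr 1
    exact eq_normalizingScalar (ht p) (hc ▸ hx.2.1 p)
  · exact projRep_renormalize ht hy.1.2

lemma eventually_normForm_none_ne_zero :
    ∀ᶠ t in zariskiGeneric (NormalizedSliceParam n s R J), ∀ p, normForm t p none ≠ 0 :=
  eventually_all.2 fun p => (eventually_eval_ne_zero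
    (X_ne_zero (R := ℂ) (Sum.inr (Sum.inl (p, none)) : NormalizedSliceParam n s R J))).mono
      fun t ht => by rwa [eval_X] at ht

lemma eventually_dotProduct_ne_zero {ι κ : Type*} [Fintype ι] {f : ι → κ} (hf : f.Injective)
    {v : ι → ℂ} (hv : v ≠ 0) : ∀ᶠ u in zariskiGeneric κ, (u ∘ f) ⬝ᵥ v ≠ 0 := by
  classical
  obtain ⟨i, hi⟩ := Function.ne_iff.1 hv
  have heval (u : ι → ℂ) : eval u (∑ j, X j * C (v j)) = u ⬝ᵥ v := by
    simp only [map_sum, map_mul, eval_X, eval_C, dotProduct]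
  have hlin : ∑ j, X j * C (v j) ≠ (0 : MvPolynomial ι ℂ) := by
    intro h
    have h0 := heval (Pi.single i 1)
    rw [h, map_zero, single_one_dotProduct] at h0
    exact hi h0.symm
  have hgeneric := eventually_eval_ne_zero hlin
  rw [← map_comp_zariskiGeneric hf] at hgeneric
  exact (eventually_map.1 hgeneric).mono fun u hu => heval (u ∘ f) ▸ hu

lemma eventually_det_ne_zero {m : Type*} [Fintype m] [DecidableEq m] {κ : Type*} {f : m × m → κ}
    (hf : f.Injective) :
    ∀ᶠ u in zariskiGeneric κ, (Matrix.of fun i j => u (f (i, j))).det ≠ 0 := by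
  have hgeneric := eventually_eval_ne_zero (Matrix.det_mvPolynomialX_ne_zero m ℂ)
  rw [← map_comp_zariskiGeneric hf] at hgeneric
  refine (eventually_map.1 hgeneric).mono fun u hu => ?_
  rwa [Matrix.eval_det_mvPolynomialX] at hu

lemma eventually_linPart_extend_dotProduct_ne_zero {a : NormalizedSliceParam n k R J → ℂ}
    (ha : ∀ i, normForm a i none ≠ 0) {y : MIdx n k → ℂ} {ρ : J → Fin k}
    (hy : y ∈ normalizedSlice ρ a) (p : Fin s) :
    ∀ᶠ u in zariskiGeneric (NormalizedSliceParam n s R J),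
      linPart (normForm (Function.extend (repParam R J P) a u) p) ⬝ᵥ
        vecPart y (P.blockOf p) ≠ 0 := by
  by_cases hp : ∃ i, P.rep i = p
  · obtain ⟨i, rfl⟩ := hp
    refine Eventually.of_forall fun u => ?_
    have hnorm : normForm (Function.extend (repParam R J P) a u) (P.rep i) = normForm a i :=
      funext fun o => (repParam_injective P).extend_apply a u (Sum.inr (Sum.inl (i, o)))
    rw [hnorm, P.blockOf_rep]
    exact linPart_dotProduct_ne_zero (c := 1) (ha i) (by rw [one_smul]; exact hy.2.1 i)
  · have hfree (o : Option (Fin n)) :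
        ¬∃ b, repParam R J P b = Sum.inr (Sum.inl (p, o)) := by
      rintro ⟨b | b | b, hb⟩ <;> simp only [repParam, Sum.map_inl, Sum.map_inr, reduceCtorEq,
        Sum.inr.injEq, Sum.inl.injEq, Prod.map, Prod.mk.injEq] at hb
      exact hp ⟨b.1, hb.1⟩
    have hnorm (u) : linPart (normForm (Function.extend (repParam R J P) a u) p) =
        u ∘ fun l => Sum.inr (Sum.inl (p, some l)) :=
      funext fun l => Function.extend_apply' _ _ _ (hfree (some l))
    simp only [hnorm]
    refine eventually_dotProduct_ne_zero (fun l l' h => ?_)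
      (vecPart_ne_zero_of_mem_normalizedSlice (ha _) hy)
    simpa using h

/-- Away from the representatives the normalizations of the slice of `W` can be moved freely while
the slice of `V` is fixed. Outside a meagre set of choices their linear parts vanish at none of
countably many given points of the latter slice: at none of its points if it is finite, and at none
of an infinite subset otherwise, when both cardinalities have the junk value `0`. -/
lemma hasMD.eq_of_isDiagonalCone [Countable J] {γ : Fin (s + 1) → ℕ} {g : Fin k → ℕ} {δ δ' : ℕ}
    (hVW : IsDiagonalCone P V W) (hV : hasMD V (Fin.cons (γ 0) g : Fin (k + 1) → ℕ) δ)
    (hW : hasMD W γ δ') (e : ∀ p, Option {j // π j = p} ≃ Fin (n - γ p.succ))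
    (e' : ∀ i, Option {j // (P.blockOf ∘ π) j = i} ≃ Fin (n - g i)) : δ = δ' := by
  have hpull : ∀ᶠ t in zariskiGeneric (NormalizedSliceParam n s (n ^ 2 - γ 0) J),
      {y ∈ V ∩ normalizedSlice (P.blockOf ∘ π) (t ∘ repParam _ J P) |
        ∀ p, linPart (normForm t p) ⬝ᵥ vecPart y (P.blockOf p) ≠ 0}.ncard = δ' := by
    filter_upwards [hW.eventually_ncard_normalizedSlice e, eventually_normForm_none_ne_zero]
      with t hWt ht
    rw [← (hVW.bijOn_projRep ht).ncard_eq, hWt]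
  have hslice : ∀ᶠ a in zariskiGeneric (NormalizedSliceParam n k (n ^ 2 - γ 0) J),
      (V ∩ normalizedSlice (P.blockOf ∘ π) a).ncard = δ := hV.eventually_ncard_normalizedSlice e'
  obtain ⟨a, hVa, ha, hau⟩ := (hslice.and
    (eventually_normForm_none_ne_zero.and
      (eventually_eventually_extend (repParam_injective P) hpull))).exists
  have hext (u) : Function.extend (repParam (n ^ 2 - γ 0) J P) a u ∘ repParam _ J P = a :=
    Function.extend_comp (repParam_injective P) _ _
  simp only [hext] at hau
  have hall : ∀ᶠ u in residual (NormalizedSliceParam n s (n ^ 2 - γ 0) J → ℂ),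
      {y ∈ V ∩ normalizedSlice (P.blockOf ∘ π) a | ∀ p,
        linPart (normForm (Function.extend (repParam _ J P) a u) p) ⬝ᵥ
          vecPart y (P.blockOf p) ≠ 0}.ncard = (V ∩ normalizedSlice (P.blockOf ∘ π) a).ncard :=
    eventually_ncard_sep_eq fun y hy => residual_le_zariskiGeneric <| eventually_all.2 fun p =>
      eventually_linPart_extend_dotProduct_ne_zero ha hy.2 p
  obtain ⟨u, hu, hu'⟩ :=
    (dense_of_mem_residual (hall.and (residual_le_zariskiGeneric hau))).nonempty
  exact hVa.symm.trans (hu.symm.trans hu')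

lemma hasMD.eq_zero_of_isDiagonalCone {γ : Fin (s + 1) → ℕ} {δ : ℕ}
    (hVW : IsDiagonalCone P V W) (hW : hasMD W γ δ)
    (e : ∀ p, Option {j // π j = p} ≃ Fin (n - γ p.succ)) {i : Fin k}
    (f : Fin n ↪ {j // P.blockOf (π j) = i}) : δ = 0 := by
  have hdet : ∀ᶠ t in zariskiGeneric (NormalizedSliceParam n s (n ^ 2 - γ 0) J),
      (Matrix.of fun a => linForm t (f a).1).det ≠ 0 := by
    refine eventually_det_ne_zero (f := fun al => Sum.inr (Sum.inr ((f al.1).1, al.2))) ?_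
    rintro ⟨a, l⟩ ⟨b, m⟩ h
    simpa [Subtype.val_inj] using h
  obtain ⟨t, hWt, ht, htdet⟩ := ((hW.eventually_ncard_normalizedSlice e).and
    (eventually_normForm_none_ne_zero.and hdet)).exists
  have hempty : W ∩ normalizedSlice π t = ∅ := by
    refine Set.eq_empty_of_forall_notMem fun x hx => ?_
    refine vecPart_ne_zero_of_mem_normalizedSlice (ht (P.rep i)) hx.2 ?_
    refine Matrix.eq_zero_of_mulVec_eq_zero htdet (funext fun a => ?_)
    have hlin := (hVW.mapsTo_projRep ht hx).1.2.2.2 (f a).1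
    rwa [Function.comp_apply, (f a).2] at hlin
  rw [← hWt, hempty, Set.ncard_empty]

end DiagonalSlices

section Multidegrees

variable {n s k : ℕ} {γ : Fin (s + 1) → ℕ}

/-- The sum over the `i`-th block of the codegrees `n - 1 - γ_p` of the exponents on its factors. -/
def blockCodegree (n : ℕ) (P : IdxPartition s k) (γ : Fin (s + 1) → ℕ) (i : Fin k) : ℕ :=
  ∑ p ∈ P.block i, (n - 1 - γ p.succ)

/-- The exponent on `ℙ_k` whose codegree on the `i`-th factor is the sum of the codegrees of `γ`
along the `i`-th block. The subtraction is truncated when this sum is at least `n`. -/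
def contractedExp (n : ℕ) (P : IdxPartition s k) (γ : Fin (s + 1) → ℕ) : Fin (k + 1) → ℕ :=
  Fin.cons (γ 0) fun i => n - 1 - blockCodegree n P γ i

lemma IdxPartition.block_eq_filter (P : IdxPartition s k) (i : Fin k) :
    P.block i = ({p | P.blockOf p = i} : Finset (Fin s)) := by
  ext p
  rw [P.mem_block_iff, Finset.mem_filter_univ]

lemma card_codegree_fiber (n : ℕ) (γ : Fin (s + 1) → ℕ) (p : Fin s) :
    Fintype.card {j : Σ p : Fin s, Fin (n - 1 - γ p.succ) // j.1 = p} = n - 1 - γ p.succ := by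
  rw [Fintype.card_congr (Equiv.sigmaSubtype p), Fintype.card_fin]

lemma card_codegree_block (n : ℕ) (P : IdxPartition s k) (γ : Fin (s + 1) → ℕ) (i : Fin k) :
    Fintype.card {j : Σ p : Fin s, Fin (n - 1 - γ p.succ) // P.blockOf j.1 = i} =
      blockCodegree n P γ i := by
  rw [Fintype.card_congr (Equiv.subtypeSigmaEquiv _ fun p => P.blockOf p = i), Fintype.card_sigma]
  simp only [Fintype.card_fin]
  exact (Finset.sum_subtype (P.block i) (fun _ => P.mem_block_iff)
    fun p => n - 1 - γ p.succ).symm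

lemma nonempty_option_codegree_fiber_equiv {p : Fin s} (hγ : γ p.succ < n) :
    Nonempty (Option {j : Σ p : Fin s, Fin (n - 1 - γ p.succ) // j.1 = p} ≃
      Fin (n - γ p.succ)) := by
  refine ⟨Fintype.equivFinOfCardEq ?_⟩
  rw [Fintype.card_option, card_codegree_fiber]
  omega

lemma nonempty_option_codegree_block_equiv {P : IdxPartition s k} {i : Fin k}
    (hP : blockCodegree n P γ i < n) :
    Nonempty (Option {j : Σ p : Fin s, Fin (n - 1 - γ p.succ) // P.blockOf j.1 = i} ≃
      Fin (n - (n - 1 - blockCodegree n P γ i))) := by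
  refine ⟨Fintype.equivFinOfCardEq ?_⟩
  rw [Fintype.card_option, card_codegree_block]
  omega

variable {P : IdxPartition s k} {V : Set (MIdx n k → ℂ)} {W : Set (MIdx n s → ℂ)} {δ δ' : ℕ}

lemma hasMD.eq_of_blockCodegree_lt (hVW : IsDiagonalCone P V W) (hγ : ∀ p : Fin s, γ p.succ < n)
    (hP : ∀ i, blockCodegree n P γ i < n) (hV : hasMD V (contractedExp n P γ) δ)
    (hW : hasMD W γ δ') : δ = δ' :=
  hV.eq_of_isDiagonalCone hVW hW
    (fun p => (nonempty_option_codegree_fiber_equiv (hγ p)).some)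
    fun i => (nonempty_option_codegree_block_equiv (hP i)).some

lemma hasMD.eq_zero_of_le_blockCodegree (hVW : IsDiagonalCone P V W)
    (hγ : ∀ p : Fin s, γ p.succ < n) {i : Fin k} (hP : n ≤ blockCodegree n P γ i)
    (hW : hasMD W γ δ) : δ = 0 := by
  rw [← card_codegree_block] at hP
  obtain ⟨f⟩ := Function.Embedding.nonempty_of_card_le ((Fintype.card_fin n).trans_le hP)
  exact hW.eq_zero_of_isDiagonalCone hVW
    (fun p => (nonempty_option_codegree_fiber_equiv (hγ p)).some) f

lemma sum_blockCodegree (n : ℕ) (P : IdxPartition s k) (γ : Fin (s + 1) → ℕ) :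
    ∑ i, blockCodegree n P γ i = ∑ p : Fin s, (n - 1 - γ p.succ) := by
  simp only [blockCodegree, P.block_eq_filter]
  exact Finset.sum_fiberwise _ _ _

lemma sum_add_sum_sub_of_lt {f : Fin s → ℕ} (hf : ∀ p, f p < n) :
    ∑ p, f p + ∑ p, (n - 1 - f p) = s * (n - 1) := by
  rw [← Finset.sum_add_distrib, Finset.sum_congr rfl fun p _ =>
    Nat.add_sub_of_le (Nat.le_sub_one_of_lt (hf p))]
  simp only [Finset.sum_const, Finset.card_univ, Fintype.card_fin, smul_eq_mul]

lemma sum_contractedExp_add (hγ : ∀ p : Fin s, γ p.succ < n)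
    (hP : ∀ i, blockCodegree n P γ i < n) :
    ∑ i, contractedExp n P γ i + s * (n - 1) = ∑ j, γ j + k * (n - 1) := by
  have hs := sum_add_sum_sub_of_lt hγ
  have hk := sum_add_sum_sub_of_lt hP
  rw [sum_blockCodegree] at hk
  rw [Fin.sum_univ_succ γ, Fin.sum_univ_succ, ← hs, ← hk]
  simp only [contractedExp, Fin.cons_zero, Fin.cons_succ]
  ring

end Multidegrees

section DiagonalClass

variable {n : ℕ} {R σ τ : Type*} [CommSemiring R]

/-- The class of the diagonal of `ℙ^{n-1} × ℙ^{n-1}`, the hyperplane classes of the two factors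
being the variables `i` and `j`. -/
def diagonalClass (R : Type*) [CommSemiring R] (n : ℕ) (i j : σ) : MvPolynomial σ R :=
  ∑ r ∈ Finset.range n, X i ^ (n - 1 - r) * X j ^ r

variable [Fintype τ] {a b : τ → σ}

/-- The exponent of the monomial of `∏ t, diagonalClass R n (a t) (b t)` whose exponent at `b t`
is `r t`. -/
def diagonalExp (n : ℕ) (a b : τ → σ) (r : τ → ℕ) : σ →₀ ℕ :=
  ∑ t, (Finsupp.single (a t) (n - 1 - r t) + Finsupp.single (b t) (r t))

lemma diagonalExp_apply [DecidableEq σ] (n : ℕ) (a b : τ → σ) (r : τ → ℕ) (j : σ) :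
    diagonalExp n a b r j =
      ∑ t, ((if a t = j then n - 1 - r t else 0) + if b t = j then r t else 0) := by
  simp only [diagonalExp, Finsupp.finsetSum_apply, Finsupp.add_apply, Finsupp.single_apply]

lemma diagonalExp_apply_right (hb : b.Injective) (hab : ∀ t u, a t ≠ b u) (r : τ → ℕ) (t : τ) :
    diagonalExp n a b r (b t) = r t := by
  classical
  simp only [diagonalExp_apply, hab, hb.eq_iff, if_false, zero_add, Finset.sum_ite_eq',
    Finset.mem_univ, if_true]

lemma diagonalExp_apply_of_forall_ne [DecidableEq σ] {j : σ} (hj : ∀ t, b t ≠ j) (r : τ → ℕ) :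
    diagonalExp n a b r j = ∑ t, if a t = j then n - 1 - r t else 0 := by
  simp only [diagonalExp_apply, hj, if_false, add_zero]

lemma prod_diagonalClass (R : Type*) [CommSemiring R] [DecidableEq τ] (n : ℕ) (a b : τ → σ) :
    ∏ t, diagonalClass R n (a t) (b t) =
      ∑ r ∈ Fintype.piFinset fun _ => Finset.range n, monomial (diagonalExp n a b r) 1 := by
  simp only [diagonalClass, Finset.prod_univ_sum, X_pow_eq_monomial, monomial_mul, mul_one,
    diagonalExp, monomial_sum_one]

lemma coeff_mul_prod_diagonalClass (hb : b.Injective) (hab : ∀ t u, a t ≠ b u)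
    {q : MvPolynomial σ R} (hq : ∀ t, b t ∉ q.vars) {γ : σ →₀ ℕ} (hγ : ∀ t, γ (b t) < n) :
    coeff γ (q * ∏ t, diagonalClass R n (a t) (b t)) =
      coeff γ (q * monomial (diagonalExp n a b (γ ∘ b)) 1) := by
  classical
  rw [prod_diagonalClass, Finset.mul_sum, coeff_sum]
  refine Finset.sum_eq_single_of_mem _
    (Fintype.mem_piFinset.2 fun t => Finset.mem_range.2 (hγ t)) fun r _ hr => ?_
  rw [coeff_mul_monomial', mul_one]
  split_ifs with hle
  · by_contra hcoeff
    refine hr (funext fun t => ?_)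
    have hvar : (γ - diagonalExp n a b r) (b t) = 0 := by
      by_contra hne
      exact hq t ((mem_vars_iff_mem_support _).2
        ⟨_, mem_support_iff.2 hcoeff, Finsupp.mem_support_iff.2 hne⟩)
    have hle := hle (b t)
    rw [Finsupp.tsub_apply, diagonalExp_apply_right hb hab] at *
    exact le_antisymm hle (tsub_eq_zero_iff_le.1 hvar)
  · rfl

end DiagonalClass

section ClassFormula

variable {n s k : ℕ} {P : IdxPartition s k}

lemma mem_chowIdeal_of_coeff_eq_zero {q : MvPolynomial (Fin (s + 1)) ℤ}
    (hq : ∀ γ : Fin (s + 1) →₀ ℕ, inBox n s γ → coeff γ q = 0) : q ∈ chowIdeal n s := by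
  have hmonomial {γ : Fin (s + 1) →₀ ℕ} {j : Fin (s + 1)} {e : ℕ} (he : e ≤ γ j)
      (hj : X j ^ e ∈ chowIdeal n s) (c : ℤ) : monomial γ c ∈ chowIdeal n s := by
    refine Ideal.mem_of_dvd _ ?_ hj
    rw [X_pow_eq_monomial, monomial_dvd_monomial]
    exact ⟨Or.inr (Finsupp.single_le_iff.2 he), one_dvd c⟩
  rw [q.as_sum]
  refine Ideal.sum_mem _ fun γ hγ => ?_
  by_cases h0 : n ^ 2 ≤ γ 0
  · exact hmonomial h0 (Ideal.subset_span (Or.inl rfl)) _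
  · obtain ⟨j, hj⟩ : ∃ j : Fin s, n ≤ γ j.succ := by
      by_contra! h
      exact mem_support_iff.1 hγ (hq γ ⟨not_le.1 h0, h⟩)
    exact hmonomial hj (Ideal.subset_span (Or.inr ⟨j, rfl⟩)) _

/-- The indices other than the representatives of their blocks, with their blocks. -/
abbrev IdxPartition.NonRep (P : IdxPartition s k) : Type :=
  Σ i, (P.block i).erase (P.rep i)

/-- The variable `t_p` of an index `p` that is not a representative. -/
def IdxPartition.nonRepVar (P : IdxPartition s k) (t : P.NonRep) : Fin (s + 1) :=
  Fin.succ t.2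

/-- The variable of the representative of the block of an index. -/
def IdxPartition.repVar (P : IdxPartition s k) (t : P.NonRep) : Fin (s + 1) :=
  (P.rep t.1).succ

lemma IdxPartition.nonRepVar_injective (P : IdxPartition s k) : P.nonRepVar.Injective := by
  rintro ⟨i, p, hp⟩ ⟨j, q, hq⟩ h
  obtain rfl : p = q := Fin.succ_injective _ h
  obtain rfl : i = j := by
    rw [← P.mem_block_iff.1 (Finset.mem_of_mem_erase hp),
      P.mem_block_iff.1 (Finset.mem_of_mem_erase hq)]
  rfl

lemma IdxPartition.nonRepVar_ne_rep (P : IdxPartition s k) (t : P.NonRep) (i : Fin k) :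
    P.nonRepVar t ≠ (P.rep i).succ := by
  obtain ⟨j, p, hp⟩ := t
  intro h
  obtain rfl : p = P.rep i := Fin.succ_injective _ h
  obtain ⟨hne, hmem⟩ := Finset.mem_erase.1 hp
  rw [P.mem_block_iff, P.blockOf_rep] at hmem
  exact hne (congrArg P.rep hmem)

lemma blockVarMap_injective (P : IdxPartition s k) : (blockVarMap P).Injective :=
  Fin.cons_injective_iff.2 ⟨fun ⟨_, hi⟩ => Fin.succ_ne_zero _ hi,
    (Fin.succ_injective s).comp P.rep_injective⟩

lemma IdxPartition.nonRepVar_notMem_range_blockVarMap (P : IdxPartition s k) (t : P.NonRep) :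
    P.nonRepVar t ∉ Set.range (blockVarMap P) := by
  rintro ⟨j, hj⟩
  cases j using Fin.cases with
  | zero => exact Fin.succ_ne_zero _ hj.symm
  | succ i => exact P.nonRepVar_ne_rep t i hj.symm

lemma IdxPartition.mem_range_nonRepVar_or_mem_range_blockVarMap (P : IdxPartition s k)
    (j : Fin (s + 1)) : j ∈ Set.range P.nonRepVar ∨ j ∈ Set.range (blockVarMap P) := by
  cases j using Fin.cases with
  | zero => exact Or.inr ⟨0, rfl⟩
  | succ p =>
    by_cases hp : p = P.rep (P.blockOf p)
    · exact Or.inr ⟨(P.blockOf p).succ, congrArg Fin.succ hp.symm⟩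
    · exact Or.inl
        ⟨⟨P.blockOf p, p, Finset.mem_erase.2 ⟨hp, P.mem_block_iff.2 rfl⟩⟩, rfl⟩

/-- The exponent of the monomial of the product of the diagonal classes which agrees with `γ` away
from the representatives. -/
def blockDiagonalExp (n : ℕ) (P : IdxPartition s k) (γ : Fin (s + 1) →₀ ℕ) : Fin (s + 1) →₀ ℕ :=
  diagonalExp n P.repVar P.nonRepVar (γ ∘ P.nonRepVar)

lemma blockDiagonalExp_nonRepVar (n : ℕ) (P : IdxPartition s k) (γ : Fin (s + 1) →₀ ℕ)
    (t : P.NonRep) : blockDiagonalExp n P γ (P.nonRepVar t) = γ (P.nonRepVar t) :=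
  diagonalExp_apply_right P.nonRepVar_injective (fun t u => (P.nonRepVar_ne_rep u t.1).symm) _ t

lemma blockDiagonalExp_zero (n : ℕ) (P : IdxPartition s k) (γ : Fin (s + 1) →₀ ℕ) :
    blockDiagonalExp n P γ 0 = 0 := by
  have hne (t : P.NonRep) : P.nonRepVar t ≠ 0 := Fin.succ_ne_zero _
  rw [blockDiagonalExp, diagonalExp_apply_of_forall_ne hne]
  exact Finset.sum_eq_zero fun t _ => if_neg (Fin.succ_ne_zero _)

lemma add_blockDiagonalExp_rep (n : ℕ) (P : IdxPartition s k) (γ : Fin (s + 1) →₀ ℕ) (i : Fin k) :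
    n - 1 - γ (P.rep i).succ + blockDiagonalExp n P γ (P.rep i).succ = blockCodegree n P γ i := by
  have hvar (t : P.NonRep) : P.repVar t = (P.rep i).succ ↔ t.1 = i :=
    (Fin.succ_injective _).eq_iff.trans P.rep_injective.eq_iff
  rw [blockDiagonalExp, diagonalExp_apply_of_forall_ne fun t => P.nonRepVar_ne_rep t i]
  simp only [hvar, Fintype.sum_sigma]
  rw [Finset.sum_eq_single_of_mem i (Finset.mem_univ i) fun j _ hj =>
    Finset.sum_eq_zero fun p _ => if_neg hj]
  simp only [if_true]
  rw [blockCodegree, ← Finset.add_sum_erase _ _ (P.rep_mem_block i)]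
  exact congrArg _ (Finset.sum_coe_sort _ fun p : Fin s => n - 1 - γ p.succ)

lemma mapDomain_contractedExp_add (γ : Fin (s + 1) →₀ ℕ) (hγ : ∀ p : Fin s, γ p.succ < n)
    (hP : ∀ i, blockCodegree n P γ i < n) :
    (Finsupp.equivFunOnFinite.symm (contractedExp n P γ)).mapDomain (blockVarMap P) +
      blockDiagonalExp n P γ = γ := by
  ext j
  rw [Finsupp.add_apply]
  rcases P.mem_range_nonRepVar_or_mem_range_blockVarMap j with ⟨t, rfl⟩ | ⟨j, rfl⟩
  · rw [Finsupp.mapDomain_of_notMem_range _ _ (P.nonRepVar_notMem_range_blockVarMap t), zero_add,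
      blockDiagonalExp_nonRepVar]
  · rw [Finsupp.mapDomain_apply (blockVarMap_injective P)]
    cases j using Fin.cases with
    | zero => exact congrArg (γ 0 + ·) (blockDiagonalExp_zero n P γ)
    | succ i =>
      change n - 1 - blockCodegree n P γ i + blockDiagonalExp n P γ (P.rep i).succ =
        γ (P.rep i).succ
      have hlt := hγ (P.rep i)
      have hcodegree := hP i
      rw [← add_blockDiagonalExp_rep] at hcodegree ⊢
      omega

lemma coeff_rename_mul_prod_diagonalClass {γ : Fin (s + 1) →₀ ℕ}
    (hγ : ∀ p : Fin s, γ p.succ < n) (q : MvPolynomial (Fin (k + 1)) ℤ) :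
    coeff γ (rename (blockVarMap P) q *
        ∏ t, diagonalClass ℤ n (P.repVar t) (P.nonRepVar t)) =
      coeff γ (rename (blockVarMap P) q * monomial (blockDiagonalExp n P γ) 1) := by
  refine coeff_mul_prod_diagonalClass P.nonRepVar_injective
    (fun t u => (P.nonRepVar_ne_rep u t.1).symm) (fun t ht => ?_) fun t => hγ _
  obtain ⟨j, -, hj⟩ := mem_vars_rename _ _ ht
  exact P.nonRepVar_notMem_range_blockVarMap t ⟨j, hj⟩

lemma coeff_rename_mul_monomial_of_lt {γ : Fin (s + 1) →₀ ℕ} (hγ : ∀ p : Fin s, γ p.succ < n)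
    (hP : ∀ i, blockCodegree n P γ i < n) (q : MvPolynomial (Fin (k + 1)) ℤ) :
    coeff γ (rename (blockVarMap P) q * monomial (blockDiagonalExp n P γ) 1) =
      coeff (Finsupp.equivFunOnFinite.symm (contractedExp n P γ)) q := by
  nth_rw 1 [← mapDomain_contractedExp_add γ hγ hP]
  rw [coeff_mul_monomial, mul_one, coeff_rename_mapDomain _ (blockVarMap_injective P)]

lemma coeff_mul_monomial_of_le {γ : Fin (s + 1) →₀ ℕ} {i : Fin k}
    (hγ : γ (P.rep i).succ < n) (hP : n ≤ blockCodegree n P γ i)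
    (q : MvPolynomial (Fin (s + 1)) ℤ) :
    coeff γ (q * monomial (blockDiagonalExp n P γ) 1) = 0 := by
  rw [coeff_mul_monomial', if_neg]
  intro hle
  have hrep := hle (P.rep i).succ
  rw [← add_blockDiagonalExp_rep] at hP
  omega

variable {d e : ℕ} {V : Set (MIdx n k → ℂ)} {W : Set (MIdx n s → ℂ)}
  {wk : MvPolynomial (Fin (k + 1)) ℤ} {wsp : MvPolynomial (Fin (s + 1)) ℤ}

lemma representsClass.coeff_eq_of_blockCodegree_lt (hVW : IsDiagonalCone P V W)
    (hde : e + k * (n - 1) = d + s * (n - 1)) (hV : representsClass V d wk)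
    (hW : representsClass W e wsp) {γ : Fin (s + 1) → ℕ} (hγ : inBox n s γ)
    (hP : ∀ i, blockCodegree n P γ i < n) :
    coeff (Finsupp.equivFunOnFinite.symm γ) wsp =
      coeff (Finsupp.equivFunOnFinite.symm (contractedExp n P γ)) wk := by
  have hsum := sum_contractedExp_add hγ.2 hP
  have hbox : inBox n k (contractedExp n P γ) := by
    refine ⟨hγ.1, fun i => ?_⟩
    have hi := hP i
    change n - 1 - blockCodegree n P γ i < n
    omega
  by_cases hdeg : ∑ j, γ j = e
  · obtain ⟨δ, hδ, hmdV⟩ := hV.1 _ hbox (by omega)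
    obtain ⟨δ', hδ', hmdW⟩ := hW.1 γ hγ hdeg
    exact hδ'.trans <| (congrArg Nat.cast
      (hmdV.eq_of_blockCodegree_lt hVW hγ.2 hP hmdW).symm).trans hδ.symm
  · exact (hW.2 γ fun h => hdeg h.2).trans (hV.2 _ fun h => hdeg (by omega)).symm

lemma representsClass.coeff_eq_zero_of_le_blockCodegree (hVW : IsDiagonalCone P V W)
    (hW : representsClass W e wsp) {γ : Fin (s + 1) → ℕ} (hγ : inBox n s γ) {i : Fin k}
    (hP : n ≤ blockCodegree n P γ i) : coeff (Finsupp.equivFunOnFinite.symm γ) wsp = 0 := by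
  by_cases hdeg : ∑ j, γ j = e
  · obtain ⟨δ, hδ, hmd⟩ := hW.1 γ hγ hdeg
    exact hδ.trans (congrArg Nat.cast (hmd.eq_zero_of_le_blockCodegree hVW hγ.2 hP))
  · exact hW.2 γ fun h => hdeg h.2

lemma representsClass.coeff_eq_of_isDiagonalCone (hVW : IsDiagonalCone P V W)
    (hde : e + k * (n - 1) = d + s * (n - 1)) (hV : representsClass V d wk)
    (hW : representsClass W e wsp) {γ : Fin (s + 1) →₀ ℕ} (hγ : inBox n s γ) :
    coeff γ wsp = coeff γ (rename (blockVarMap P) wk *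
      ∏ t, diagonalClass ℤ n (P.repVar t) (P.nonRepVar t)) := by
  rw [coeff_rename_mul_prod_diagonalClass hγ.2]
  by_cases hP : ∀ i, blockCodegree n P γ i < n
  · rw [coeff_rename_mul_monomial_of_lt hγ.2 hP,
      ← hV.coeff_eq_of_blockCodegree_lt hVW hde hW hγ hP, Finsupp.equivFunOnFinite_symm_coe]
  · push Not at hP
    obtain ⟨i, hi⟩ := hP
    rw [coeff_mul_monomial_of_le (hγ.2 _) hi,
      ← hW.coeff_eq_zero_of_le_blockCodegree hVW hγ hi, Finsupp.equivFunOnFinite_symm_coe]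

lemma prod_block_erase_rep_diagonalClass (n : ℕ) (P : IdxPartition s k) :
    ∏ i, ∏ p ∈ (P.block i).erase (P.rep i), diagonalClass ℤ n (P.rep i).succ p.succ =
      ∏ t, diagonalClass ℤ n (P.repVar t) (P.nonRepVar t) := by
  rw [Fintype.prod_sigma]
  exact Finset.prod_congr rfl fun i _ =>
    (Finset.prod_coe_sort _ fun p : Fin s => diagonalClass ℤ n (P.rep i).succ p.succ).symm

end ClassFormula

/-- The hypothesis `hde` says that codimension `d` in `ℙ_k` and codimension `e` in `ℙ_s` amount to
the same dimension. -/
theorem WsP_class_formula_general {n s k d e : ℕ} {P : IdxPartition s k}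
    {V : Set (MIdx n k → ℂ)} {W : Set (MIdx n s → ℂ)} (hVW : IsDiagonalCone P V W)
    (hde : e + k * (n - 1) = d + s * (n - 1))
    {wk : MvPolynomial (Fin (k + 1)) ℤ} (hwk : representsClass V d wk)
    {wsp : MvPolynomial (Fin (s + 1)) ℤ} (hwsp : representsClass W e wsp) :
    Ideal.Quotient.mk (chowIdeal n s) wsp =
      phiP n P (Ideal.Quotient.mk (chowIdeal n k) wk) *
        ∏ i : Fin k, ∏ p ∈ (P.block i).erase (P.rep i),
          Ideal.Quotient.mk (chowIdeal n s) (diagonalClass ℤ n (P.rep i).succ p.succ) := by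
  have hphi : phiP n P (Ideal.Quotient.mk (chowIdeal n k) wk) =
      Ideal.Quotient.mk (chowIdeal n s) (rename (blockVarMap P) wk) := rfl
  simp only [hphi, ← map_prod]
  rw [prod_block_erase_rep_diagonalClass, ← map_mul, Ideal.Quotient.eq]
  refine mem_chowIdeal_of_coeff_eq_zero fun γ hγ => ?_
  rw [coeff_sub, hwk.coeff_eq_of_isDiagonalCone hVW hde hwsp hγ, sub_self]

/-- For a partition `P = {P_1, …, P_k}` of `{1, …, s}` with `q_i = min P_i`,
the Chow class of `W_{s,P}` in `A^*(ℙ_s) = ℤ[t_0, …, t_s]/(t_0^{n²}, t_1^n, …, t_s^n)`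
satisfies `[W_{s,P}] = φ_P([W̃_k]) · ∏_i ∏_{p ∈ P_i \ {q_i}} (∑_r t_{q_i}^{n-1-r} t_p^r)`. -/
theorem WsP_class_formula (n s k : ℕ) (hn : 0 < n) (hs : 0 < s) (hsn : s ≤ n)
    (P : IdxPartition s k)
    (wk : MvPolynomial (Fin (k + 1)) ℤ)
    (hwk : representsClass (WsPcone n (singletonPartition k)) (k * (n - 1)) wk)
    (wsp : MvPolynomial (Fin (s + 1)) ℤ)
    (hwsp : representsClass (WsPcone n P) (s * (n - 1)) wsp) :
    Ideal.Quotient.mk (chowIdeal n s) wsp =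
      phiP n P (Ideal.Quotient.mk (chowIdeal n k) wk) *
        ∏ i : Fin k, ∏ p ∈ (P.block i).erase (P.rep i),
          Ideal.Quotient.mk (chowIdeal n s)
            (∑ r ∈ Finset.range n, MvPolynomial.X (P.rep i).succ ^ (n - 1 - r) *
              MvPolynomial.X p.succ ^ r) :=
  WsP_class_formula_general (isDiagonalCone_WsPcone n P) (add_comm _ _) hwk hwsp

end
end

section
/- For every partition P of [s], the coefficient c_{s,P} of the class h_0·Σ_{i=1}^{s} h_1^{n-1}···h_i^{n-2}···h_s^{n-1} in [W_{s,P}] ∈ A^{s(n-1)}(P_s) equals the coefficient c̃_{|P|} of h_0·Σ_{i=1}^{|P|} h_1^{n-1}···h_i^{n-2}···h_{|P|}^{n-1} in [W̃_{|P|}] ∈ A^{|P|(n-1)}(P_{|P|}). -/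
noncomputable section

/-!
A generic slice of type `h₀ ∏ hⱼ ^ (n-1) / hᵢ` cuts the matrix factor down to a line `A(t)`,
imposes one affine equation on every vector factor `j ≠ i`, which fixes the scale of the
eigenvector `vⱼ`, and imposes two on `vᵢ`.  Eliminating the constant terms of those two leaves one
linear form `l` vanishing on `vᵢ`, so `A(t)` lies in a Kalman variety and `t` is a root of
`det (l, l A(t), …, l A(t) ^ (n-1))`, which has degree `n.choose 2`.  At each root `A(t)` has `n`
distinct eigenvalues, exactly one of whose eigenlines lies in `l = 0`; this determines the block
of `i`, and the other `k - 1` blocks choose distinct ones among the remaining `n - 1` eigenlines.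
Hence the coefficient is `n.choose 2 * (n-1) (n-2) ⋯ (n-k+1)`, which depends only on `n` and `k`.

Points added by the Zariski closure still satisfy `adj ((A v)_b - v_b A) w = 0` for `v`, `w` from
distinct blocks, and this forces `w` to have another eigenvalue when those of `A` are distinct.
Slices of this kind form an open set by resultants.  It is nonempty because for the pencil
`diag (0, …, n-1) + t N`, with `N` having superdiagonal `1, …, n-1`, the Kalman determinants are
products of Appell polynomials.
-/

section EigenvectorAlgebra

open Polynomial Matrix

variable {m : Type*} [Fintype m] {R : Type*} [CommRing R] {K : Type*} [Field K]

lemma exists_mulVec_eq_X_sub_C_smul {M : Matrix m m R[X]} {t : R} {v : m → R}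
    (hv : M.map (eval t) *ᵥ v = 0) : ∃ u : m → R[X], M *ᵥ (C ∘ v) = (X - C t) • u := by
  have hdvd (i : m) : X - C t ∣ (M *ᵥ (C ∘ v)) i := by
    rw [dvd_iff_isRoot, IsRoot]
    simpa [mulVec, dotProduct, eval_finsetSum] using congrFun hv i
  choose u hu using hdvd
  exact ⟨u, funext hu⟩

variable [DecidableEq m]

lemma adjugate_eq_zero_of_linearIndependent_pair {M : Matrix m m K} {v w : m → K}
    (h : LinearIndependent K ![v, w]) (hv : M *ᵥ v = 0) (hw : M *ᵥ w = 0) : M.adjugate = 0 := by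
  ext i j
  obtain ⟨x, hx0, hx, hxi⟩ : ∃ x : m → K, x ≠ 0 ∧ M *ᵥ x = 0 ∧ x i = 0 := by
    by_cases hvi : v i = 0
    · exact ⟨v, h.ne_zero 0, hv, hvi⟩
    · refine ⟨w i • v - v i • w, fun h0 => hvi ?_, by simp [mulVec_sub, mulVec_smul, hv, hw], ?_⟩
      · simpa using (LinearIndependent.pair_iff.1 h (w i) (-v i)
          (by rwa [neg_smul, ← sub_eq_add_neg])).2
      · simp [mul_comm]
  rw [adjugate_apply, Matrix.zero_apply, ← exists_mulVec_eq_zero_iff]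
  refine ⟨x, hx0, funext fun k => ?_⟩
  by_cases hk : k = j
  · subst hk
    simp [mulVec, hxi]
  · simpa [mulVec, hk] using congrFun hx k

/- If `M v = (X - t) u` and `adj M = (X - t) N`, then `det M • v = adj M (M v) = (X - t)² N u`. -/
lemma X_sub_C_sq_dvd_det {M : Matrix m m K[X]} {t : K} {v w : m → K}
    (h : LinearIndependent K ![v, w]) (hv : M.map (eval t) *ᵥ v = 0)
    (hw : M.map (eval t) *ᵥ w = 0) : (X - C t) ^ 2 ∣ M.det := by
  obtain ⟨i, hi⟩ := Function.ne_iff.1 (h.ne_zero 0)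
  obtain ⟨u, hu⟩ := exists_mulVec_eq_X_sub_C_smul hv
  have hadj (j k : m) : X - C t ∣ M.adjugate j k := by
    have h0 := adjugate_eq_zero_of_linearIndependent_pair h hv hw
    rw [← coe_evalRingHom, ← RingHom.mapMatrix_apply, ← RingHom.map_adjugate] at h0
    exact dvd_iff_isRoot.2 congr($h0 j k)
  have hdet : M.det * C (v i) = (X - C t) * (M.adjugate *ᵥ u) i := by
    have h1 := congr((M.adjugate *ᵥ $hu) i)
    rwa [mulVec_mulVec, adjugate_mul, smul_mulVec, one_mulVec, mulVec_smul] at h1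
  rw [← (isUnit_C.2 (IsUnit.mk0 _ hi)).dvd_mul_right]
  change _ ∣ M.det * C (v i)
  rw [hdet, sq]
  exact mul_dvd_mul_left _ (Finset.dvd_sum fun k _ => (hadj i k).mul_right _)

lemma exists_smul_eq_of_det_separable {M : Matrix m m K[X]} (hM : M.det.Separable) {t : K}
    {v w : m → K} (hv0 : v ≠ 0) (hv : M.map (eval t) *ᵥ v = 0) (hw : M.map (eval t) *ᵥ w = 0) :
    ∃ c : K, c • v = w := by
  by_contra! h
  have hdvd := X_sub_C_sq_dvd_det ((LinearIndependent.pair_iff' hv0).2 h) hv hw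
  exact not_isUnit_X_sub_C t (hM.squarefree _ (sq (X - C t) ▸ hdvd))

lemma charmatrix_map_eval (A : Matrix m m R) (t : R) :
    A.charmatrix.map (eval t) = t • 1 - A := by
  ext i j
  by_cases h : i = j
  · simp [h]
  · simp [h]

lemma charmatrix_map_eval_mulVec (A : Matrix m m R) (t : R) (v : m → R) :
    A.charmatrix.map (eval t) *ᵥ v = t • v - A *ᵥ v := by
  rw [charmatrix_map_eval, sub_mulVec, smul_mulVec, one_mulVec]

lemma isRoot_charpoly_iff_exists_mulVec_eq {A : Matrix m m K} {t : K} :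
    A.charpoly.IsRoot t ↔ ∃ v, v ≠ 0 ∧ A *ᵥ v = t • v := by
  rw [IsRoot, charpoly, ← coe_evalRingHom, RingHom.map_det, ← exists_mulVec_eq_zero_iff]
  simp_rw [RingHom.mapMatrix_apply, coe_evalRingHom, charmatrix_map_eval_mulVec, sub_eq_zero,
    eq_comm (a := t • _)]

lemma exists_smul_eq_of_charpoly_separable {A : Matrix m m K} (hA : A.charpoly.Separable) {t : K}
    {v w : m → K} (hv0 : v ≠ 0) (hv : A *ᵥ v = t • v) (hw : A *ᵥ w = t • w) :
    ∃ c : K, c • v = w :=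
  exists_smul_eq_of_det_separable (M := A.charmatrix) hA hv0
    (by rw [charmatrix_map_eval_mulVec, hv, sub_self])
    (by rw [charmatrix_map_eval_mulVec, hw, sub_self])

lemma adjugate_smul_one_sub_mulVec_eq_zero {A : Matrix m m K} {t μ : K} {v w : m → K}
    (h : LinearIndependent K ![v, w]) (hv : A *ᵥ v = t • v) (hw : A *ᵥ w = μ • w) :
    (t • 1 - A).adjugate *ᵥ w = 0 := by
  have hv' : (t • 1 - A) *ᵥ v = 0 := by rw [sub_mulVec, smul_mulVec, one_mulVec, hv, sub_self]
  have hw' : (t • 1 - A) *ᵥ w = (t - μ) • w := by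
    rw [sub_mulVec, smul_mulVec, one_mulVec, hw, sub_smul]
  obtain rfl | hne := eq_or_ne t μ
  · rw [sub_self, zero_smul] at hw'
    rw [adjugate_eq_zero_of_linearIndependent_pair h hv' hw', zero_mulVec]
  · have hdet : (t • 1 - A).det = 0 := exists_mulVec_eq_zero_iff.1 ⟨v, h.ne_zero 0, hv'⟩
    refine (smul_eq_zero.1 ?_).resolve_left (sub_ne_zero.2 hne)
    rw [← mulVec_smul, ← hw', mulVec_mulVec, adjugate_mul, hdet, zero_smul, zero_mulVec]

lemma adjugate_smul_one_sub_mulVec_ne_zero {A : Matrix m m K} (hA : A.charpoly.Separable) {t : K}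
    {w : m → K} (hw0 : w ≠ 0) (hw : A *ᵥ w = t • w) : (t • 1 - A).adjugate *ᵥ w ≠ 0 := by
  intro hadj
  obtain ⟨i, hi⟩ := Function.ne_iff.1 hw0
  have hker : A.charmatrix *ᵥ (C ∘ w) = (X - C t) • (C ∘ w) := by
    rw [charmatrix, sub_mulVec, sub_smul]
    congr 1
    · ext j : 1
      simp [scalar_apply, mulVec_diagonal]
    · ext j : 1
      simpa [← RingHom.map_mulVec] using congrArg C (congrFun hw j)
  have hmul : A.charpoly * C (w i) = (X - C t) * (A.charmatrix.adjugate *ᵥ (C ∘ w)) i := by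
    have h1 := congr((A.charmatrix.adjugate *ᵥ $hker) i)
    rwa [mulVec_mulVec, adjugate_mul, smul_mulVec, one_mulVec, mulVec_smul] at h1
  have hdvd : X - C t ∣ (A.charmatrix.adjugate *ᵥ (C ∘ w)) i := by
    rw [← charmatrix_map_eval, ← coe_evalRingHom, ← RingHom.mapMatrix_apply,
      ← RingHom.map_adjugate] at hadj
    rw [dvd_iff_isRoot, IsRoot]
    simpa [mulVec, dotProduct, eval_finsetSum] using congrFun hadj i
  refine not_isUnit_X_sub_C t (hA.squarefree _ ?_)
  rw [← (isUnit_C.2 (IsUnit.mk0 _ hi)).dvd_mul_right]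
  exact hmul ▸ mul_dvd_mul_left _ hdvd

end EigenvectorAlgebra

section Observability

open Polynomial Matrix

variable {n : ℕ} {R S : Type*} [CommRing R] [CommRing S] {K : Type*} [Field K]

/-- The observability matrix of the functional `l` and the matrix `A`, with rows
`l, l A, …, l A ^ (n - 1)`. Its determinant is the Kalman determinant of `A` along the
hyperplane `l = 0`. -/
def observabilityMatrix (l : Fin n → R) (A : Matrix (Fin n) (Fin n) R) :
    Matrix (Fin n) (Fin n) R :=
  Matrix.of fun i => l ᵥ* A ^ (i : ℕ)

lemma observabilityMatrix_map (φ : R →+* S) (l : Fin n → R) (A : Matrix (Fin n) (Fin n) R) :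
    observabilityMatrix (φ ∘ l) (A.map φ) = (observabilityMatrix l A).map φ := by
  ext i j
  rw [observabilityMatrix, of_apply, ← Matrix.map_pow, ← RingHom.map_vecMul]
  rfl

lemma det_observabilityMatrix_map (φ : R →+* S) (l : Fin n → R) (A : Matrix (Fin n) (Fin n) R) :
    (observabilityMatrix (φ ∘ l) (A.map φ)).det = φ (observabilityMatrix l A).det := by
  rw [observabilityMatrix_map, RingHom.map_det, RingHom.mapMatrix_apply]

lemma observabilityMatrix_mulVec (l : Fin n → R) (A : Matrix (Fin n) (Fin n) R) (v : Fin n → R)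
    (i : Fin n) : (observabilityMatrix l A *ᵥ v) i = l ⬝ᵥ (A ^ (i : ℕ) *ᵥ v) :=
  (dotProduct_mulVec l (A ^ (i : ℕ)) v).symm

lemma pow_mulVec_of_mulVec_eq_smul {A : Matrix (Fin n) (Fin n) R} {μ : R} {v : Fin n → R}
    (hv : A *ᵥ v = μ • v) (i : ℕ) : A ^ i *ᵥ v = μ ^ i • v := by
  induction i with
  | zero => simp
  | succ i ih =>
    rw [pow_succ, ← mulVec_mulVec, hv, mulVec_smul, ih, smul_smul, pow_succ, mul_comm]

lemma observabilityMatrix_mulVec_eigenvector {A : Matrix (Fin n) (Fin n) R} {μ : R}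
    {v : Fin n → R} (hv : A *ᵥ v = μ • v) (l : Fin n → R) :
    observabilityMatrix l A *ᵥ v = fun i : Fin n => μ ^ (i : ℕ) * l ⬝ᵥ v := by
  ext i
  rw [observabilityMatrix_mulVec, pow_mulVec_of_mulVec_eq_smul hv, dotProduct_smul, smul_eq_mul]

lemma observabilityMatrix_mulVec_eq_zero {A : Matrix (Fin n) (Fin n) R} {l v : Fin n → R} {μ : R}
    (hv : A *ᵥ v = μ • v) (hl : l ⬝ᵥ v = 0) : observabilityMatrix l A *ᵥ v = 0 := by
  ext i
  simp [observabilityMatrix_mulVec_eigenvector hv, hl]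

lemma dotProduct_pow_mulVec_eq_zero {A : Matrix (Fin n) (Fin n) R} {l v : Fin n → R}
    (h : observabilityMatrix l A *ᵥ v = 0) (i : ℕ) : l ⬝ᵥ (A ^ i *ᵥ v) = 0 := by
  nontriviality R
  rw [pow_eq_aeval_mod_charpoly, aeval_eq_sum_range, sum_mulVec, dotProduct_sum]
  refine Finset.sum_eq_zero fun j _ => ?_
  rw [smul_mulVec, dotProduct_smul]
  by_cases hj : j < n
  · rw [← observabilityMatrix_mulVec l A v ⟨j, hj⟩, h, Pi.zero_apply, smul_zero]
  · rw [coeff_eq_zero_of_degree_lt, zero_smul]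
    refine (degree_modByMonic_lt _ A.charpoly_monic).trans_le ?_
    simpa [charpoly_degree_eq_dim] using hj

/- The kernel of the observability matrix is `A`-invariant, so if it is nonzero it contains an
eigenvector. -/
lemma det_observabilityMatrix_eq_zero_iff [IsAlgClosed K] {l : Fin n → K}
    {A : Matrix (Fin n) (Fin n) K} :
    (observabilityMatrix l A).det = 0 ↔ ∃ v, v ≠ 0 ∧ (∃ μ : K, A *ᵥ v = μ • v) ∧ l ⬝ᵥ v = 0 := by
  constructor
  · intro h
    obtain ⟨v, hv0, hv⟩ := exists_mulVec_eq_zero_iff.2 h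
    let W := LinearMap.ker (toLin' (observabilityMatrix l A))
    have hW (u : Fin n → K) (hu : u ∈ W) : toLin' A u ∈ W := by
      ext i
      have h1 := dotProduct_pow_mulVec_eq_zero hu (i + 1)
      rwa [pow_succ, ← mulVec_mulVec, ← observabilityMatrix_mulVec] at h1
    have : Nontrivial W := ⟨⟨v, hv⟩, 0, fun h0 => hv0 congr(Subtype.val $h0)⟩
    obtain ⟨μ, hμ⟩ := Module.End.exists_eigenvalue ((toLin' A).restrict hW)
    obtain ⟨u, hu⟩ := hμ.exists_hasEigenvector
    refine ⟨u, fun h0 => hu.2 (Subtype.ext h0), ⟨μ, congr(Subtype.val $hu.apply_eq_smul)⟩, ?_⟩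
    simpa using dotProduct_pow_mulVec_eq_zero u.2 0
  · rintro ⟨v, hv0, ⟨μ, hμ⟩, hl⟩
    exact exists_mulVec_eq_zero_iff.1 ⟨v, hv0, observabilityMatrix_mulVec_eq_zero hμ hl⟩

lemma observabilityMatrix_map_eval (l : Fin n → R) (A : Matrix (Fin n) (Fin n) R[X]) (t : R) :
    (observabilityMatrix (C ∘ l) A).map (eval t) = observabilityMatrix l (A.map (eval t)) := by
  rw [← coe_evalRingHom, ← observabilityMatrix_map]
  congr 1
  ext i
  simp

lemma exists_smul_eq_of_det_observabilityMatrix_separable {l : Fin n → K}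
    {A : Matrix (Fin n) (Fin n) K[X]} (h : (observabilityMatrix (C ∘ l) A).det.Separable)
    {t μ ν : K} {v w : Fin n → K} (hv0 : v ≠ 0) (hv : A.map (eval t) *ᵥ v = μ • v)
    (hlv : l ⬝ᵥ v = 0) (hw : A.map (eval t) *ᵥ w = ν • w) (hlw : l ⬝ᵥ w = 0) :
    ∃ c : K, c • v = w := by
  refine exists_smul_eq_of_det_separable (t := t) h hv0 ?_ ?_
  · rw [observabilityMatrix_map_eval, observabilityMatrix_mulVec_eq_zero hv hlv]
  · rw [observabilityMatrix_map_eval, observabilityMatrix_mulVec_eq_zero hw hlw]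

lemma natDegree_det_le_sum {ι : Type*} [Fintype ι] [DecidableEq ι] {M : Matrix ι ι R[X]}
    {d : ι → ℕ} (h : ∀ i j, (M i j).natDegree ≤ d i) : M.det.natDegree ≤ ∑ i, d i := by
  rw [← det_transpose, det_apply]
  refine natDegree_sum_le_of_forall_le _ _ fun σ _ => ?_
  refine (natDegree_smul_le _ _).trans ((natDegree_prod_le _ _).trans ?_)
  exact Finset.sum_le_sum fun i _ => h i (σ i)

lemma natDegree_pow_apply_le {ι : Type*} [Fintype ι] [DecidableEq ι] {A : Matrix ι ι R[X]}
    (hA : ∀ i j, (A i j).natDegree ≤ 1) (k : ℕ) (i j : ι) : ((A ^ k) i j).natDegree ≤ k := by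
  induction k generalizing i j with
  | zero =>
    rw [pow_zero, one_apply]
    split <;> simp
  | succ k ih =>
    rw [pow_succ, mul_apply]
    exact natDegree_sum_le_of_forall_le _ _ fun r _ =>
      natDegree_mul_le.trans (add_le_add (ih i r) (hA r j))

lemma natDegree_det_observabilityMatrix_le {l : Fin n → R} {A : Matrix (Fin n) (Fin n) R[X]}
    (hA : ∀ i j, (A i j).natDegree ≤ 1) :
    (observabilityMatrix (C ∘ l) A).det.natDegree ≤ n.choose 2 := by
  rw [Nat.choose_two_right, ← Finset.sum_range_id, ← Fin.sum_univ_eq_sum_range (fun i => i)]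
  refine natDegree_det_le_sum fun i j => ?_
  change (∑ r, C (l r) * (A ^ (i : ℕ)) r j).natDegree ≤ i
  exact natDegree_sum_le_of_forall_le _ _ fun r _ =>
    (natDegree_C_mul_le _ _).trans (natDegree_pow_apply_le hA i r j)

end Observability

section Discriminant

open Polynomial Matrix

variable {R S : Type*} [CommRing R] [CommRing S] {K : Type*} [Field K]

lemma resultant_ne_zero_iff_isCoprime {f g : K[X]} {e : ℕ} (hf : f ≠ 0) (hg : g.natDegree ≤ e) :
    resultant f g f.natDegree e ≠ 0 ↔ IsCoprime f g := by
  obtain ⟨k, rfl⟩ := Nat.exists_eq_add_of_le hg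
  rw [resultant_add_right_deg _ _ _ _ _ le_rfl, mul_ne_zero_iff]
  simp [resultant_eq_zero_iff, hf]

variable {n : ℕ}

/-- The discriminant of the characteristic polynomial of `A`, up to sign, as the resultant of the
characteristic polynomial and its derivative. The degrees are fixed so that it commutes with
arbitrary ring homomorphisms. -/
def charpolyDisc (A : Matrix (Fin n) (Fin n) R) : R :=
  resultant A.charpoly A.charpoly.derivative n (n - 1)

lemma charpolyDisc_map (φ : R →+* S) (A : Matrix (Fin n) (Fin n) R) :
    charpolyDisc (A.map φ) = φ (charpolyDisc A) := by
  rw [charpolyDisc, charpolyDisc, ← resultant_map_map, charpoly_map, derivative_map]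

lemma charpolyDisc_ne_zero_iff {A : Matrix (Fin n) (Fin n) K} :
    charpolyDisc A ≠ 0 ↔ A.charpoly.Separable := by
  have hdeg : A.charpoly.natDegree = n := by simp
  have h := resultant_ne_zero_iff_isCoprime A.charpoly_monic.ne_zero
    (natDegree_derivative_le A.charpoly)
  rwa [hdeg] at h

end Discriminant

section Zariski

variable {ι : Type*}

lemma zOpen_eval_ne_zero (p : MvPolynomial ι ℂ) : zOpen {x | MvPolynomial.eval x p ≠ 0} :=
  TopologicalSpace.isOpen_generateFrom_of_mem ⟨p, rfl⟩

lemma zDense_eval_ne_zero {p : MvPolynomial ι ℂ} (hp : p ≠ 0) :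
    zDense {x | MvPolynomial.eval x p ≠ 0} := by
  let _ := zTop ι
  let B : Set (Set (ι → ℂ)) := {U | ∃ q : MvPolynomial ι ℂ, U = {x | MvPolynomial.eval x q ≠ 0}}
  have hB : TopologicalSpace.IsTopologicalBasis B := by
    have huniv : Set.univ ∈ B := ⟨1, by simp⟩
    rw [← Set.insert_eq_of_mem huniv]
    refine TopologicalSpace.isTopologicalBasis_of_subbasis_of_inter rfl ?_
    rintro _ ⟨q, rfl⟩ _ ⟨r, rfl⟩
    exact ⟨q * r, by ext x; simp [not_or]⟩
  refine hB.dense_iff.2 ?_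
  rintro _ ⟨q, rfl⟩ ⟨x, hx⟩
  have hq : q ≠ 0 := by
    rintro rfl
    simp at hx
  obtain ⟨y, hy⟩ : ∃ y, MvPolynomial.eval y (q * p) ≠ 0 := by
    by_contra! h
    exact mul_ne_zero hq hp (MvPolynomial.funext (by simpa using h))
  rw [map_mul, mul_ne_zero_iff] at hy
  exact ⟨y, hy⟩

lemma subset_zClosure (S : Set (ι → ℂ)) : S ⊆ zClosure S := by
  let _ := zTop ι
  exact subset_closure

lemma zClosure_empty : zClosure (∅ : Set (ι → ℂ)) = ∅ := by
  let _ := zTop ι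
  exact closure_empty

lemma eval_eq_zero_of_mem_zClosure {S : Set (ι → ℂ)} {p : MvPolynomial ι ℂ}
    (h : ∀ x ∈ S, MvPolynomial.eval x p = 0) {x : ι → ℂ} (hx : x ∈ zClosure S) :
    MvPolynomial.eval x p = 0 := by
  let _ := zTop ι
  have hclosed : IsClosed {x : ι → ℂ | MvPolynomial.eval x p = 0} := by
    rw [← isOpen_compl_iff]
    exact zOpen_eval_ne_zero p
  exact closure_minimal (s := S) h hclosed hx

end Zariski

namespace IdxPartition

variable {s k : ℕ} (P : IdxPartition s k)

/-- The index of the block of `P` containing `p`. -/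
def index (p : Fin s) : Fin k := (P.cover p).choose

lemma mem_block_iff_s5 {p : Fin s} {c : Fin k} : p ∈ P.block c ↔ P.index p = c := by
  have hp : p ∈ P.block (P.index p) := (P.cover p).choose_spec
  refine ⟨fun h => ?_, fun h => h ▸ hp⟩
  by_contra hne
  exact Finset.disjoint_left.1 (P.disj _ _ hne) hp h

lemma index_rep (c : Fin k) : P.index (P.rep c) = c :=
  P.mem_block_iff_s5.1 (Finset.min'_mem _ _)

end IdxPartition

lemma PCompatible.linearIndependent_pair {n s k : ℕ} {P : IdxPartition s k}
    {v : Fin s → Fin n → ℂ} (h : PCompatible P v) {p q : Fin s} (hpq : P.index p ≠ P.index q) :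
    LinearIndependent ℂ ![v p, v q] := by
  let r := Function.update (Function.update P.rep (P.index p) p) (P.index q) q
  have hr (c : Fin k) : r c ∈ P.block c := by
    rw [P.mem_block_iff_s5]
    rcases eq_or_ne c (P.index q) with rfl | hq
    · simp [r]
    rcases eq_or_ne c (P.index p) with rfl | hp
    · simp [r, hq]
    · simp [r, hq, hp, P.index_rep]
  have hinj : Function.Injective ![P.index p, P.index q] := by
    simpa [Function.Injective, Fin.forall_fin_two] using ⟨hpq, hpq.symm⟩
  convert (h.2.2 r hr).comp _ hinj using 1
  ext a
  fin_cases a <;> simp [r, hpq]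

section Membership

open Polynomial Matrix

variable {n s k : ℕ} {P : IdxPartition s k} {x : MIdx n s → ℂ}

lemma exists_eq_smul_of_forall_mul_eq_mul {ι K : Type*} [Field K] {v w : ι → K} (hv : v ≠ 0)
    (h : ∀ a b, w a * v b = w b * v a) : ∃ c : K, w = c • v := by
  obtain ⟨b, hb⟩ := Function.ne_iff.1 hv
  refine ⟨w b / v b, funext fun a => ?_⟩
  rw [Pi.smul_apply, smul_eq_mul, div_mul_eq_mul_div, eq_div_iff hb, h]

/-- The matrix component of the generic point of the multicone. -/
def genericMatPart (n s : ℕ) : Matrix (Fin n) (Fin n) (MvPolynomial (MIdx n s) ℂ) :=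
  Matrix.of fun a b => MvPolynomial.X (Sum.inl (a, b))

/-- The `p`-th vector component of the generic point of the multicone. -/
def genericVecPart (n s : ℕ) (p : Fin s) : Fin n → MvPolynomial (MIdx n s) ℂ :=
  fun a => MvPolynomial.X (Sum.inr (p, a))

lemma eval_comp_genericVecPart (x : MIdx n s → ℂ) (p : Fin s) :
    MvPolynomial.eval x ∘ genericVecPart n s p = vecPart x p := by
  ext a
  simp [genericVecPart, vecPart]

lemma eval_genericVecPart (x : MIdx n s → ℂ) (p : Fin s) (a : Fin n) :
    MvPolynomial.eval x (genericVecPart n s p a) = vecPart x p a :=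
  congrFun (eval_comp_genericVecPart x p) a

lemma genericMatPart_map_eval (x : MIdx n s → ℂ) :
    (genericMatPart n s).map (MvPolynomial.eval x) = toMat (matPart x) := by
  ext a b
  simp [genericMatPart, toMat, matPart]

lemma eval_genericMatPart_mulVec (x : MIdx n s → ℂ) (p : Fin s) (a : Fin n) :
    MvPolynomial.eval x ((genericMatPart n s *ᵥ genericVecPart n s p) a) =
      (toMat (matPart x) *ᵥ vecPart x p) a := by
  rw [RingHom.map_mulVec, genericMatPart_map_eval, eval_comp_genericVecPart]

lemma exists_mulVec_vecPart_eq_smul (hx : x ∈ WsPcone n P) {p : Fin s} (hp : vecPart x p ≠ 0) :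
    ∃ μ : ℂ, toMat (matPart x) *ᵥ vecPart x p = μ • vecPart x p := by
  refine exists_eq_smul_of_forall_mul_eq_mul hp fun a b => ?_
  let A := genericMatPart n s
  let v := genericVecPart n s p
  suffices h : MvPolynomial.eval x ((A *ᵥ v) a * v b - (A *ᵥ v) b * v a) = 0 by
    simpa [A, v, eval_genericMatPart_mulVec, eval_genericVecPart, sub_eq_zero] using h
  refine eval_eq_zero_of_mem_zClosure ?_ hx
  rintro y ⟨⟨-, hy⟩, -⟩
  obtain ⟨-, μ, hμ⟩ := hy p
  simp only [A, v, map_sub, map_mul, eval_genericMatPart_mulVec, eval_genericVecPart, hμ,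
    Pi.smul_apply, smul_eq_mul]
  ring

lemma exists_vecPart_eq_smul (hx : x ∈ WsPcone n P) {p q : Fin s} (hpq : P.index p = P.index q)
    (hp : vecPart x p ≠ 0) : ∃ c : ℂ, vecPart x q = c • vecPart x p := by
  refine exists_eq_smul_of_forall_mul_eq_mul hp fun a b => ?_
  let v := genericVecPart n s
  suffices h : MvPolynomial.eval x (v q a * v p b - v q b * v p a) = 0 by
    simpa [v, eval_genericVecPart, sub_eq_zero] using h
  refine eval_eq_zero_of_mem_zClosure ?_ hx
  rintro y ⟨-, -, hy, -⟩
  obtain ⟨c, hc⟩ : ∃ c : ℂ, vecPart y q = c • vecPart y p :=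
    hy _ q (P.mem_block_iff_s5.2 rfl) p (P.mem_block_iff_s5.2 hpq)
  simp only [v, map_sub, map_mul, eval_genericVecPart, hc, Pi.smul_apply, smul_eq_mul]
  ring

lemma map_smul_one_sub_smul {R S : Type*} [CommRing R] [CommRing S] (φ : R →+* S) (c d : R)
    (A : Matrix (Fin n) (Fin n) R) :
    (c • (1 : Matrix (Fin n) (Fin n) R) - d • A).map φ =
      φ c • (1 : Matrix (Fin n) (Fin n) S) - φ d • A.map φ := by
  ext a b
  by_cases h : a = b <;> simp [h]

lemma smul_one_sub_smul_eq_smul {R : Type*} [CommRing R] {A : Matrix (Fin n) (Fin n) R}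
    {μ : R} {v : Fin n → R} (hv : A *ᵥ v = μ • v) (b : Fin n) :
    (A *ᵥ v) b • (1 : Matrix (Fin n) (Fin n) R) - v b • A = v b • (μ • 1 - A) := by
  rw [hv, smul_sub, smul_smul, Pi.smul_apply, smul_eq_mul, mul_comm]

/- On the dense part of `W` the vectors in distinct blocks are independent eigenvectors; the
equation says so polynomially, with the eigenvalue `μ` of `v` entering through `μ v_b = (A v)_b`. -/
lemma adjugate_mulVec_vecPart_eq_zero (hx : x ∈ WsPcone n P) {p q : Fin s}
    (hpq : P.index p ≠ P.index q) (b : Fin n) :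
    ((toMat (matPart x) *ᵥ vecPart x p) b • (1 : Matrix (Fin n) (Fin n) ℂ) -
      vecPart x p b • toMat (matPart x)).adjugate *ᵥ vecPart x q = 0 := by
  ext a
  let A := genericMatPart n s
  let v := genericVecPart n s p
  have heval (y : MIdx n s → ℂ) : MvPolynomial.eval y ((((A *ᵥ v) b •
      (1 : Matrix (Fin n) (Fin n) _) - v b • A).adjugate *ᵥ genericVecPart n s q) a) =
      (((toMat (matPart y) *ᵥ vecPart y p) b • (1 : Matrix (Fin n) (Fin n) ℂ) -
        vecPart y p b • toMat (matPart y)).adjugate *ᵥ vecPart y q) a := by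
    rw [RingHom.map_mulVec, ← RingHom.mapMatrix_apply, RingHom.map_adjugate,
      RingHom.mapMatrix_apply, map_smul_one_sub_smul, eval_genericMatPart_mulVec,
      eval_genericVecPart, genericMatPart_map_eval, eval_comp_genericVecPart]
  rw [← heval]
  refine eval_eq_zero_of_mem_zClosure ?_ hx
  rintro y ⟨⟨-, hy⟩, hcomp⟩
  obtain ⟨-, μ, hμ⟩ := hy p
  obtain ⟨-, ν, hν⟩ := hy q
  rw [heval, smul_one_sub_smul_eq_smul hμ, adjugate_smul, smul_mulVec,
    adjugate_smul_one_sub_mulVec_eq_zero (hcomp.linearIndependent_pair hpq) hμ hν, smul_zero,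
    Pi.zero_apply]

lemma eigenvalue_ne_of_mem_WsPcone (hx : x ∈ WsPcone n P) {d : ℂ}
    (hM : (d • toMat (matPart x)).charpoly.Separable) (hv : ∀ p, vecPart x p ≠ 0) {p q : Fin s}
    (hpq : P.index p ≠ P.index q) {μ ν : ℂ}
    (hμ : (d • toMat (matPart x)) *ᵥ vecPart x p = μ • vecPart x p)
    (hν : (d • toMat (matPart x)) *ᵥ vecPart x q = ν • vecPart x q) : μ ≠ ν := by
  rintro rfl
  obtain ⟨b, hb⟩ := Function.ne_iff.1 (hv p)
  have h0 := adjugate_mulVec_vecPart_eq_zero hx hpq b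
  have hscale : vecPart x p b • (μ • (1 : Matrix (Fin n) (Fin n) ℂ) - d • toMat (matPart x)) =
      d • ((toMat (matPart x) *ᵥ vecPart x p) b • 1 - vecPart x p b • toMat (matPart x)) := by
    rw [← smul_one_sub_smul_eq_smul hμ, smul_mulVec, smul_sub, Pi.smul_apply, smul_eq_mul,
      mul_smul, smul_comm d (vecPart x p b)]
  have h1 := congr(adjugate $hscale *ᵥ vecPart x q)
  rw [adjugate_smul, adjugate_smul, smul_mulVec, smul_mulVec, h0, smul_zero] at h1
  exact adjugate_smul_one_sub_mulVec_ne_zero hM (hv q) hν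
    ((smul_eq_zero.1 h1).resolve_left (pow_ne_zero _ hb))

lemma pCompatible_of_separable {M : Matrix (Fin n) (Fin n) ℂ} (hM : M.charpoly.Separable)
    {v : Fin s → Fin n → ℂ} (hv : ∀ p, v p ≠ 0) {μ : Fin k → ℂ} (hμ : Function.Injective μ)
    (h : ∀ p, M *ᵥ v p = μ (P.index p) • v p) : PCompatible P v := by
  refine ⟨hv, fun c p hp q hq => ?_, fun r hr => ?_⟩
  · rw [P.mem_block_iff_s5] at hp hq
    obtain ⟨a, ha⟩ := exists_smul_eq_of_charpoly_separable hM (hv q) (h q)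
      (by rw [h p, hp, hq])
    exact ⟨a, ha.symm⟩
  · refine Module.End.eigenvectors_linearIndependent' (toLin' M) μ hμ _ fun c => ?_
    refine ⟨Module.End.mem_eigenspace_iff.2 ?_, hv _⟩
    rw [toLin'_apply, h, P.mem_block_iff_s5.1 (hr c)]

lemma ne_zero_of_charpoly_separable (hn : 2 ≤ n) {K : Type*} [Field K]
    {M : Matrix (Fin n) (Fin n) K} (hM : M.charpoly.Separable) : M ≠ 0 := by
  rintro rfl
  have hX : (X : K[X]) * X ∣ (0 : Matrix (Fin n) (Fin n) K).charpoly := by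
    rw [charpoly_zero, Fintype.card_fin, ← sq]
    exact pow_dvd_pow X hn
  exact not_isUnit_X (hM.squarefree X hX)

/- The closure defining `WsPcone` adds no points over matrices with distinct eigenvalues. -/
lemma mem_WsPcone_iff (hn : 2 ≤ n) {d : ℂ} (hd : d ≠ 0)
    (hM : (d • toMat (matPart x)).charpoly.Separable) (hv : ∀ p, vecPart x p ≠ 0) :
    x ∈ WsPcone n P ↔ ∃ μ : Fin k → ℂ, Function.Injective μ ∧
      ∀ p, (d • toMat (matPart x)) *ᵥ vecPart x p = μ (P.index p) • vecPart x p := by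
  constructor
  · intro hx
    choose μ hμ using fun p => exists_mulVec_vecPart_eq_smul hx (hv p)
    have hdμ (p : Fin s) : (d • toMat (matPart x)) *ᵥ vecPart x p = (d * μ p) • vecPart x p := by
      rw [smul_mulVec, hμ, smul_smul]
    refine ⟨fun c => d * μ (P.rep c), fun c c' h => ?_, fun p => ?_⟩
    · by_contra hne
      refine eigenvalue_ne_of_mem_WsPcone hx hM hv ?_ (hdμ (P.rep c)) (hdμ (P.rep c')) h
      rwa [P.index_rep, P.index_rep]
    · obtain ⟨a, ha⟩ := exists_vecPart_eq_smul hx (P.index_rep (P.index p)) (hv _)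
      rw [ha, mulVec_smul, hdμ, smul_comm]
  · rintro ⟨μ, hinj, hμ⟩
    refine subset_zClosure _ ⟨⟨fun h0 => ?_, fun p => ⟨hv p, d⁻¹ * μ (P.index p), ?_⟩⟩,
      pCompatible_of_separable hM hv hinj hμ⟩
    · refine ne_zero_of_charpoly_separable hn hM ?_
      ext
      simp [toMat, h0]
    · rw [mul_smul, ← hμ, smul_mulVec, inv_smul_smul₀ hd]

end Membership

section Line

open Polynomial Matrix

variable {κ ι R S : Type*} [DecidableEq ι] [CommRing R] [CommRing S]
  (e : Option κ ≃ ι) (a : κ × Option ι → R)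

/-- The coefficient matrix of the affine-linear equations recorded by `a`, completed by the
coordinate function `e none`. -/
def lineMatrix : Matrix ι ι R :=
  Matrix.of fun i => (e.symm i).elim (Pi.single (e none) 1) fun r j => a (r, some j)

lemma lineMatrix_map (φ : R →+* S) : lineMatrix e (φ ∘ a) = (lineMatrix e a).map φ := by
  ext i j
  obtain ⟨_ | r, rfl⟩ := e.surjective i
  · simp [lineMatrix, Pi.single_apply, apply_ite φ]
  · simp [lineMatrix]

/-- The right-hand side of the linear system whose solution with `X = t` is the point with
`e none`-coordinate `t` satisfying the equations recorded by `a`. -/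
def lineRHS : ι → R[X] :=
  fun i => (e.symm i).elim X fun r => C (-a (r, none))

variable [Fintype ι]

/-- The parametrization by its `e none`-coordinate of the line cut out by the equations recorded
by `a`, with denominators cleared: the parameter `t` goes to `det (lineMatrix e a)` times the
point of the line. -/
def linePoint : ι → R[X] :=
  (lineMatrix e a).adjugate.map C *ᵥ lineRHS e a

lemma det_lineMatrix_map (φ : R →+* S) :
    (lineMatrix e (φ ∘ a)).det = φ (lineMatrix e a).det := by
  rw [lineMatrix_map, RingHom.map_det, RingHom.mapMatrix_apply]

lemma linePoint_map (φ : R →+* S) (i : ι) :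
    linePoint e (φ ∘ a) i = (linePoint e a i).map φ := by
  have hadj (j : ι) : (lineMatrix e (φ ∘ a)).adjugate i j = φ ((lineMatrix e a).adjugate i j) := by
    rw [lineMatrix_map, ← RingHom.mapMatrix_apply, ← RingHom.map_adjugate,
      RingHom.mapMatrix_apply, map_apply]
  have hrhs (j : ι) : lineRHS e (φ ∘ a) j = (lineRHS e a j).map φ := by
    obtain ⟨_ | r, rfl⟩ := e.surjective j <;> simp [lineRHS]
  simp [linePoint, mulVec, dotProduct, Polynomial.map_sum, hadj, hrhs]

lemma natDegree_linePoint_le (i : ι) : (linePoint e a i).natDegree ≤ 1 := by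
  refine natDegree_sum_le_of_forall_le _ _ fun j _ => (natDegree_C_mul_le _ _).trans ?_
  obtain ⟨_ | r, rfl⟩ := e.surjective j <;> simp [lineRHS, natDegree_X_le, -map_neg]

lemma lineMatrix_mulVec_eq_iff {t : R} {x : ι → R} :
    lineMatrix e a *ᵥ x = (fun i => (lineRHS e a i).eval t) ↔
      x (e none) = t ∧ ∀ r, a (r, none) + ∑ i, a (r, some i) * x i = 0 := by
  simp only [funext_iff, e.surjective.forall, Option.forall, lineRHS, lineMatrix, mulVec, of_apply,
    Equiv.symm_apply_apply, Option.elim, eval_X, eval_C, single_one_dotProduct]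
  simp only [dotProduct, add_comm (a _), eq_neg_iff_add_eq_zero]

variable {e a}

lemma smul_eq_linePoint_iff [IsDomain R] (h : (lineMatrix e a).det ≠ 0) {t : R} {x : ι → R} :
    (lineMatrix e a).det • x = (fun i => (linePoint e a i).eval t) ↔
      x (e none) = t ∧ ∀ r, a (r, none) + ∑ i, a (r, some i) * x i = 0 := by
  have hinj : Function.Injective ((lineMatrix e a).adjugate *ᵥ ·) := by
    refine mulVec_injective_of_det_ne_zero ?_
    rw [det_adjugate]
    exact pow_ne_zero _ h
  rw [← lineMatrix_mulVec_eq_iff, ← hinj.eq_iff (a := lineMatrix e a *ᵥ x)]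
  simp only [mulVec_mulVec, adjugate_mul, smul_mulVec, one_mulVec]
  suffices hpt : (fun i => (linePoint e a i).eval t) =
      (lineMatrix e a).adjugate *ᵥ fun i => (lineRHS e a i).eval t by rw [hpt]
  ext i
  simp [linePoint, mulVec, dotProduct, eval_finsetSum]

lemma exists_linePoint_eq (e : Option κ ≃ ι) {d u : ι → R} (hd : d (e none) = 0)
    (hu : u (e none) = 1) :
    ∃ a : κ × Option ι → R, (lineMatrix e a).det = 1 ∧
      ∀ i, linePoint e a i = C (d i) + C (u i) * X := by
  let a : κ × Option ι → R := fun p => p.2.elim (-d (e (some p.1))) fun j =>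
    (Pi.single (e (some p.1)) 1 - Pi.single (e none) (u (e (some p.1))) : ι → R) j
  have hmat : lineMatrix e a = 1 + replicateCol Unit (Pi.single (e none) 1 - u) *
      replicateRow Unit (Pi.single (e none) (1 : R)) := by
    ext i j
    obtain ⟨_ | r, rfl⟩ := e.surjective i
    · simp [lineMatrix, hu, mul_apply, one_eq_pi_single]
    · by_cases hj : j = e none <;>
        simp [lineMatrix, a, one_eq_pi_single, Pi.single_apply, mul_apply, sub_eq_add_neg, hj]
  have hdet : (lineMatrix e a).det = 1 := by
    rw [hmat, det_one_add_replicateCol_mul_replicateRow]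
    simp [hu]
  refine ⟨a, hdet, fun i => ?_⟩
  have hrhs : lineRHS e a = (lineMatrix e a).map C *ᵥ fun i => C (d i) + C (u i) * X := by
    ext1 j
    obtain ⟨_ | r, rfl⟩ := e.surjective j
    · simp [lineRHS, lineMatrix, mulVec, dotProduct, Pi.single_apply, apply_ite C, hd, hu]
    · simp [lineRHS, lineMatrix, a, mulVec, dotProduct, Pi.single_apply, apply_ite C, hd, hu,
        sub_mul, Finset.sum_sub_distrib]
  rw [linePoint, hrhs, mulVec_mulVec, ← Matrix.map_mul, adjugate_mul, hdet]
  simp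

end Line

section SliceFrame

open Polynomial Matrix

/-- Bookkeeping for slices of multidegree type `γ` that cut every vector factor by one equation,
except for a single factor cut by two: an enumeration `coord` of the matrix coordinates
in which `coord none` parametrizes the line cut out in the matrix factor, and an enumeration `row`
of the equations on the vector factors in which `row (some j)` is an equation on the `j`-th factor
and `row none` is the additional equation. -/
structure SliceFrame (n s : ℕ) (γ : Fin (s + 1) → ℕ) where
  coord : Option (Fin (n ^ 2 - γ 0)) ≃ Fin n × Fin n
  row : Option (Fin s) ≃ Σ j : Fin s, Fin (n - γ j.succ)
  row_some : ∀ j, (row (some j)).1 = j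

namespace SliceFrame

variable {n s : ℕ} {γ : Fin (s + 1) → ℕ} (F : SliceFrame n s γ) {R S : Type*} [CommRing R]
  [CommRing S] (φ : R →+* S) (a : MSliceParam n s γ → R)

/-- The vector factor cut by two equations. -/
def doubled : Fin s := (F.row none).1

/-- The constant term of the equation `F.row o`. -/
def const (o : Option (Fin s)) : R := a (Sum.inr (F.row o, none))

/-- The linear part of the equation `F.row o`. -/
def form (o : Option (Fin s)) : Fin n → R := fun k => a (Sum.inr (F.row o, some k))

/-- The homogeneous linear form obtained by eliminating the constant terms from the two equations
on the doubled factor. -/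
def eliminant : Fin n → R :=
  F.const a none • F.form a (some F.doubled) - F.const a (some F.doubled) • F.form a none

/-- The line cut out in the matrix factor, as a matrix with linear polynomial entries, with
denominators cleared. -/
def pencil : Matrix (Fin n) (Fin n) R[X] :=
  Matrix.of fun i j => linePoint F.coord (a ∘ Sum.inl) (i, j)

/-- The restriction to the pencil of the Kalman determinant of the hyperplane `l = 0`. -/
def kalmanPoly (l : Fin n → R) : R[X] :=
  (observabilityMatrix (C ∘ l) (F.pencil a)).det

/-- The polynomial vanishing at those members of the pencil that have a multiple eigenvalue or an
eigenvector that cannot be normalized by the equation `F.row (some j)` for some `j`. -/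
def degeneracyPoly : R[X] :=
  charpolyDisc (F.pencil a) * ∏ j, F.kalmanPoly a (F.form a (some j))

lemma eliminant_map : F.eliminant (φ ∘ a) = φ ∘ F.eliminant a := by
  ext k
  simp [eliminant, const, form]

lemma pencil_map : F.pencil (φ ∘ a) = (F.pencil a).map (mapRingHom φ) := by
  ext1 i j
  simp [pencil, Function.comp_assoc, linePoint_map]

lemma kalmanPoly_map (l : Fin n → R) :
    F.kalmanPoly (φ ∘ a) (φ ∘ l) = (F.kalmanPoly a l).map φ := by
  rw [kalmanPoly, pencil_map, kalmanPoly, ← coe_mapRingHom, ← det_observabilityMatrix_map]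
  congr 2
  ext1 k
  simp

lemma degeneracyPoly_map : F.degeneracyPoly (φ ∘ a) = (F.degeneracyPoly a).map φ := by
  have hform (j : Fin s) : F.form (φ ∘ a) (some j) = φ ∘ F.form a (some j) := rfl
  rw [degeneracyPoly, pencil_map, charpolyDisc_map]
  simp only [degeneracyPoly, hform, kalmanPoly_map, Polynomial.map_mul, Polynomial.map_prod,
    coe_mapRingHom]

lemma natDegree_kalmanPoly_le (l : Fin n → R) : (F.kalmanPoly a l).natDegree ≤ n.choose 2 :=
  natDegree_det_observabilityMatrix_le fun _ _ => natDegree_linePoint_le _ _ _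

lemma eval_kalmanPoly (l : Fin n → R) (t : R) :
    (F.kalmanPoly a l).eval t = (observabilityMatrix l ((F.pencil a).map (eval t))).det := by
  rw [kalmanPoly, ← coe_evalRingHom, RingHom.map_det, RingHom.mapMatrix_apply, coe_evalRingHom,
    observabilityMatrix_map_eval]

/-- The open conditions on the parameters of a slice under which it meets `W_{s,P}` in the expected
number of points. -/
structure IsGeneric {K : Type*} [Field K] (a : MSliceParam n s γ → K) : Prop where
  det_ne_zero : (lineMatrix F.coord (a ∘ Sum.inl)).det ≠ 0
  const_ne_zero : ∀ o, F.const a o ≠ 0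
  natDegree_eq : (F.kalmanPoly a (F.eliminant a)).natDegree = n.choose 2
  separable : (F.kalmanPoly a (F.eliminant a)).Separable
  isCoprime : IsCoprime (F.kalmanPoly a (F.eliminant a)) (F.degeneracyPoly a)

/-- The polynomial function of the parameters whose nonvanishing expresses genericity, where `N`
bounds the degree of the second argument of the resultant. -/
def genericityPoly (N : ℕ) : R :=
  (lineMatrix F.coord (a ∘ Sum.inl)).det * (∏ o, F.const a o) *
    (F.kalmanPoly a (F.eliminant a)).coeff (n.choose 2) *
    resultant (F.kalmanPoly a (F.eliminant a))
      ((F.kalmanPoly a (F.eliminant a)).derivative * F.degeneracyPoly a) (n.choose 2) N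

lemma genericityPoly_map (N : ℕ) : F.genericityPoly (φ ∘ a) N = φ (F.genericityPoly a N) := by
  have hconst (o : Option (Fin s)) : F.const (φ ∘ a) o = φ (F.const a o) := rfl
  rw [genericityPoly, eliminant_map, kalmanPoly_map, degeneracyPoly_map, derivative_map,
    ← Polynomial.map_mul, resultant_map_map]
  simp only [genericityPoly, Function.comp_assoc, det_lineMatrix_map, hconst, coeff_map, map_mul,
    map_prod]

variable {F} in
lemma isGeneric_iff_genericityPoly_ne_zero {K : Type*} [Field K] {a : MSliceParam n s γ → K}
    {N : ℕ} (hN : ((F.kalmanPoly a (F.eliminant a)).derivative *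
      F.degeneracyPoly a).natDegree ≤ N) : F.IsGeneric a ↔ F.genericityPoly a N ≠ 0 := by
  let p := F.kalmanPoly a (F.eliminant a)
  have hres (h0 : p.coeff (n.choose 2) ≠ 0) (hdeg : p.natDegree = n.choose 2) :
      resultant p (p.derivative * F.degeneracyPoly a) (n.choose 2) N ≠ 0 ↔
        p.Separable ∧ IsCoprime p (F.degeneracyPoly a) := by
    have hp0 : p ≠ 0 := fun h => h0 (by simp [h])
    rw [← hdeg, resultant_ne_zero_iff_isCoprime hp0 hN, IsCoprime.mul_right_iff, Separable]
  simp only [genericityPoly, mul_ne_zero_iff, Finset.prod_ne_zero_iff, Finset.mem_univ,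
    forall_const]
  constructor
  · rintro ⟨hdet, hconst, hdeg, hsep, hcop⟩
    have h0 : p.coeff (n.choose 2) ≠ 0 := by
      rw [← hdeg, coeff_natDegree, leadingCoeff_ne_zero]
      exact hsep.ne_zero
    exact ⟨⟨⟨hdet, hconst⟩, h0⟩, (hres h0 hdeg).2 ⟨hsep, hcop⟩⟩
  · rintro ⟨⟨⟨hdet, hconst⟩, h0⟩, h⟩
    have hdeg := natDegree_eq_of_le_of_coeff_ne_zero (F.natDegree_kalmanPoly_le a _) h0
    obtain ⟨hsep, hcop⟩ := (hres h0 hdeg).1 h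
    exact ⟨hdet, hconst, hdeg, hsep, hcop⟩

lemma exists_isGeneric_iff_eval_ne_zero :
    ∃ p : MvPolynomial (MSliceParam n s γ) ℂ, ∀ a, F.IsGeneric a ↔ MvPolynomial.eval a p ≠ 0 := by
  let u : MSliceParam n s γ → MvPolynomial (MSliceParam n s γ) ℂ := MvPolynomial.X
  refine ⟨F.genericityPoly u ((F.kalmanPoly u (F.eliminant u)).derivative *
    F.degeneracyPoly u).natDegree, fun a => ?_⟩
  have ha : MvPolynomial.eval a ∘ u = a := by
    ext
    simp [u]
  rw [← genericityPoly_map, ha]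
  refine isGeneric_iff_genericityPoly_ne_zero ?_
  conv_lhs => rw [← ha, eliminant_map, kalmanPoly_map, degeneracyPoly_map, derivative_map,
    ← Polynomial.map_mul]
  exact natDegree_map_le

lemma zOpen_isGeneric : zOpen {a : MSliceParam n s γ → ℂ | F.IsGeneric a} := by
  obtain ⟨p, hp⟩ := F.exists_isGeneric_iff_eval_ne_zero
  simpa only [hp] using zOpen_eval_ne_zero p

variable {F} in
lemma IsGeneric.zDense {a : MSliceParam n s γ → ℂ} (ha : F.IsGeneric a) :
    zDense {b : MSliceParam n s γ → ℂ | F.IsGeneric b} := by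
  obtain ⟨p, hp⟩ := F.exists_isGeneric_iff_eval_ne_zero
  have hp0 : p ≠ 0 := by
    rintro rfl
    exact (hp a).1 ha (map_zero _)
  simpa only [hp] using zDense_eval_ne_zero hp0

end SliceFrame

end SliceFrame

section Counting

open Polynomial Matrix

lemma card_embedding_apply_eq {ι α : Type*} [Fintype ι] [Fintype α] (b : ι) (x : α) :
    Nat.card {f : ι ↪ α // f b = x} = (Fintype.card α - 1).descFactorial (Fintype.card ι - 1) := by
  classical
  have hfib (y : α) : Nat.card {f : ι ↪ α // f b = y} = Nat.card {f : ι ↪ α // f b = x} :=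
    Nat.card_congr <| Equiv.subtypeEquiv (Equiv.embeddingCongr (Equiv.refl ι) (Equiv.swap y x))
      fun f => by simp [Equiv.embeddingCongr, Equiv.swap_apply_eq_iff]
  have htotal : Nat.card (ι ↪ α) = Fintype.card α * Nat.card {f : ι ↪ α // f b = x} := by
    rw [← Nat.card_congr (Equiv.sigmaFiberEquiv fun f : ι ↪ α => f b), Nat.card_sigma,
      Finset.sum_congr rfl fun y _ => hfib y, Finset.sum_const, Finset.card_univ, smul_eq_mul]
  obtain ⟨N, hN⟩ := Nat.exists_eq_add_one_of_ne_zero (Fintype.card_pos_iff.2 ⟨x⟩).ne'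
  obtain ⟨k, hk⟩ := Nat.exists_eq_add_one_of_ne_zero (Fintype.card_pos_iff.2 ⟨b⟩).ne'
  rw [Nat.card_eq_fintype_card, Fintype.card_embedding_eq, hN, hk, Nat.succ_descFactorial_succ]
    at htotal
  rw [hN, hk]
  exact (Nat.eq_of_mul_eq_mul_left N.succ_pos htotal).symm

variable {K : Type*} [Field K] [IsAlgClosed K]

lemma card_isRoot_of_separable {p : K[X]} (hp : p.Separable) :
    Nat.card {t // p.IsRoot t} = p.natDegree := by
  classical
  rw [← card_rootSet_eq_natDegree (K := K) hp (IsAlgClosed.splits _), ← Nat.card_eq_fintype_card]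
  exact Nat.card_congr (Equiv.subtypeEquivRight fun t => by simp [mem_rootSet, hp.ne_zero])

variable {n : ℕ} {M : Matrix (Fin n) (Fin n) K}

lemma existsUnique_normalized_eigenvector (hM : M.charpoly.Separable) (c : K)
    {m : Fin n → K} (hm : (observabilityMatrix m M).det ≠ 0) {μ : K} (hμ : M.charpoly.IsRoot μ) :
    ∃! v, M *ᵥ v = μ • v ∧ c + m ⬝ᵥ v = 0 := by
  obtain ⟨u, hu0, hu⟩ := isRoot_charpoly_iff_exists_mulVec_eq.1 hμ
  have hmu : m ⬝ᵥ u ≠ 0 := fun h =>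
    hm (det_observabilityMatrix_eq_zero_iff.2 ⟨u, hu0, ⟨μ, hu⟩, h⟩)
  refine ⟨(-c / (m ⬝ᵥ u)) • u, ⟨by rw [mulVec_smul, hu, smul_comm], ?_⟩, ?_⟩
  · rw [dotProduct_smul, smul_eq_mul, div_mul_cancel₀ _ hmu, add_neg_cancel]
  · rintro w ⟨hw, hcw⟩
    obtain ⟨d, rfl⟩ := exists_smul_eq_of_charpoly_separable hM hu0 hu hw
    rw [dotProduct_smul, smul_eq_mul] at hcw
    rw [eq_neg_of_add_eq_zero_left hcw, neg_neg, mul_div_cancel_right₀ _ hmu]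

/-- The tuples of eigenvectors of `M` with distinct eigenvalues for distinct values of `π`,
normalized by the equations `c j + m j ⬝ᵥ v j = 0`, whose `i`-th member lies on `l = 0`. -/
def eigenTuples {σ τ : Type*} (M : Matrix (Fin n) (Fin n) K) (π : σ → τ) (c : σ → K)
    (m : σ → Fin n → K) (l : Fin n → K) (i : σ) : Set (σ → Fin n → K) :=
  {v | (∃ μ : τ → K, Function.Injective μ ∧ ∀ j, M *ᵥ v j = μ (π j) • v j) ∧
    (∀ j, c j + m j ⬝ᵥ v j = 0) ∧ l ⬝ᵥ v i = 0}

lemma exists_range_eq_eigenTuples {σ τ : Type*} {π : σ → τ} (hπ : Function.Surjective π)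
    (hM : M.charpoly.Separable) {c : σ → K} (hc : ∀ j, c j ≠ 0) {m : σ → Fin n → K}
    (hm : ∀ j, (observabilityMatrix (m j) M).det ≠ 0) {l : Fin n → K} {i : σ}
    {lam : {μ // M.charpoly.IsRoot μ}}
    (hl : ∀ (μ : K) w, w ≠ 0 → M *ᵥ w = μ • w → (l ⬝ᵥ w = 0 ↔ μ = lam)) :
    ∃ g : {f : τ ↪ {μ // M.charpoly.IsRoot μ} // f (π i) = lam} → σ → Fin n → K,
      Function.Injective g ∧ Set.range g = eigenTuples M π c m l i := by
  have hne {j : σ} {v : Fin n → K} (hv : c j + m j ⬝ᵥ v = 0) : v ≠ 0 := by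
    rintro rfl
    simp [hc] at hv
  choose ev hev hunique using fun (j : σ) (μ : {μ // M.charpoly.IsRoot μ}) =>
    existsUnique_normalized_eigenvector hM (c j) (hm j) μ.2
  refine ⟨fun f j => ev j (f.1 (π j)), fun f f' h => ?_, Set.Subset.antisymm ?_ ?_⟩
  · ext x
    obtain ⟨j, rfl⟩ := hπ x
    have hv : ev j (f.1 (π j)) = ev j (f'.1 (π j)) := congrFun h j
    have hμ := (hev j (f.1 (π j))).1
    rw [hv, (hev j (f'.1 (π j))).1] at hμ
    exact smul_left_injective K (hne (hev j _).2) hμ.symm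
  · rintro _ ⟨f, rfl⟩
    refine ⟨⟨fun x => f.1 x, Subtype.val_injective.comp f.1.injective, fun j => (hev j _).1⟩,
      fun j => (hev j _).2, ?_⟩
    exact (hl (f.1 (π i)) _ (hne (hev i _).2) (hev i _).1).2 congr(Subtype.val $(f.2))
  · rintro v ⟨⟨μ, hμ, hv⟩, hcv, hlv⟩
    have hroot (x : τ) : M.charpoly.IsRoot (μ x) := by
      obtain ⟨j, rfl⟩ := hπ x
      exact isRoot_charpoly_iff_exists_mulVec_eq.2 ⟨v j, hne (hcv j), hv j⟩
    refine ⟨⟨⟨fun x => ⟨μ x, hroot x⟩, fun x y h => hμ congr(Subtype.val $h)⟩, ?_⟩, ?_⟩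
    · exact Subtype.ext ((hl (μ (π i)) _ (hne (hcv i)) (hv i)).1 hlv)
    · exact funext fun j => (hunique j ⟨μ (π j), hroot _⟩ _ ⟨hv j, hcv j⟩).symm

lemma exists_eigenvalue_dotProduct_eq_zero_iff {A : Matrix (Fin n) (Fin n) K[X]} {l : Fin n → K}
    (h : (observabilityMatrix (C ∘ l) A).det.Separable) {t : K}
    (hl : (observabilityMatrix l (A.map (eval t))).det = 0)
    (hM : (A.map (eval t)).charpoly.Separable) :
    ∃ lam : {μ // (A.map (eval t)).charpoly.IsRoot μ},
      ∀ (μ : K) w, w ≠ 0 → A.map (eval t) *ᵥ w = μ • w → (l ⬝ᵥ w = 0 ↔ μ = lam) := by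
  obtain ⟨v, hv0, ⟨lam, hv⟩, hlv⟩ := det_observabilityMatrix_eq_zero_iff.1 hl
  refine ⟨⟨lam, isRoot_charpoly_iff_exists_mulVec_eq.2 ⟨v, hv0, hv⟩⟩, fun μ w hw0 hw => ?_⟩
  constructor
  · intro hlw
    obtain ⟨c, rfl⟩ :=
      exists_smul_eq_of_det_observabilityMatrix_separable h hv0 hv hlv hw hlw
    rw [mulVec_smul, hv, smul_comm] at hw
    exact (smul_left_injective K hw0 hw).symm
  · rintro rfl
    obtain ⟨c, rfl⟩ := exists_smul_eq_of_charpoly_separable hM hv0 hv hw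
    rw [dotProduct_smul, hlv, smul_zero]

end Counting

namespace SliceFrame

open Polynomial Matrix

variable {n s k : ℕ} {γ : Fin (s + 1) → ℕ} {F : SliceFrame n s γ} {a : MSliceParam n s γ → ℂ}
  {P : IdxPartition s k} {x : MIdx n s → ℂ}

lemma eliminant_dotProduct_eq_zero_iff (h : F.const a (some F.doubled) ≠ 0) {v : Fin n → ℂ}
    (hv : F.const a (some F.doubled) + F.form a (some F.doubled) ⬝ᵥ v = 0) :
    F.eliminant a ⬝ᵥ v = 0 ↔ F.const a none + F.form a none ⬝ᵥ v = 0 := by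
  have key : F.eliminant a ⬝ᵥ v =
      -F.const a (some F.doubled) * (F.const a none + F.form a none ⬝ᵥ v) := by
    simp only [eliminant, sub_dotProduct, smul_dotProduct, smul_eq_mul]
    linear_combination F.const a none * hv
  rw [key, mul_eq_zero, neg_eq_zero, or_iff_right h]

lemma mem_mSlice_iff (ha : F.IsGeneric a) : x ∈ mSlice γ a ↔ ∃ t : ℂ,
    (lineMatrix F.coord (a ∘ Sum.inl)).det • matPart x =
      (fun ij => (linePoint F.coord (a ∘ Sum.inl) ij).eval t) ∧
    (∀ j, F.const a (some j) + F.form a (some j) ⬝ᵥ vecPart x j = 0) ∧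
      F.eliminant a ⬝ᵥ vecPart x F.doubled = 0 := by
  have hvec : (∀ j r, a (Sum.inr (⟨j, r⟩, none)) +
      ∑ k, a (Sum.inr (⟨j, r⟩, some k)) * x (Sum.inr (j, k)) = 0) ↔
      ∀ o, F.const a o + F.form a o ⬝ᵥ vecPart x (F.row o).1 = 0 := by
    refine (Sigma.forall (p := fun u => a (Sum.inr (u, none)) +
      ∑ k, a (Sum.inr (u, some k)) * x (Sum.inr (u.1, k)) = 0)).symm.trans ?_
    exact F.row.surjective.forall
  have hdoubled (h : ∀ j, F.const a (some j) + F.form a (some j) ⬝ᵥ vecPart x j = 0) :=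
    eliminant_dotProduct_eq_zero_iff (ha.const_ne_zero _) (h F.doubled)
  simp only [mSlice, Set.mem_ofPred_eq, hvec, Option.forall, F.row_some,
    smul_eq_linePoint_iff ha.det_ne_zero, and_assoc, exists_eq_left']
  exact and_congr_right fun _ => and_comm.trans (and_congr_right fun h => (hdoubled h).symm)

/-- The vector components of the points of the slice of `W_{s,P}` over the member of the pencil
with parameter `t`. -/
def fibre (F : SliceFrame n s γ) (a : MSliceParam n s γ → ℂ) (P : IdxPartition s k) (t : ℂ) :
    Set (Fin s → Fin n → ℂ) :=
  eigenTuples ((F.pencil a).map (eval t)) P.index (fun j => F.const a (some j))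
    (fun j => F.form a (some j)) (F.eliminant a) F.doubled

lemma IsGeneric.eval_degeneracyPoly_ne_zero (ha : F.IsGeneric a) {t : ℂ}
    (ht : (F.kalmanPoly a (F.eliminant a)).IsRoot t) : (F.degeneracyPoly a).eval t ≠ 0 := by
  intro h
  exact not_isUnit_X_sub_C t
    (ha.isCoprime.isUnit_of_dvd' (dvd_iff_isRoot.2 ht) (dvd_iff_isRoot.2 h))

lemma IsGeneric.charpoly_separable (ha : F.IsGeneric a) {t : ℂ}
    (ht : (F.kalmanPoly a (F.eliminant a)).IsRoot t) :
    ((F.pencil a).map (eval t)).charpoly.Separable := by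
  rw [← charpolyDisc_ne_zero_iff, ← coe_evalRingHom, charpolyDisc_map]
  have h := ha.eval_degeneracyPoly_ne_zero ht
  rw [degeneracyPoly, eval_mul] at h
  exact left_ne_zero_of_mul h

lemma IsGeneric.det_observabilityMatrix_form_ne_zero (ha : F.IsGeneric a) {t : ℂ}
    (ht : (F.kalmanPoly a (F.eliminant a)).IsRoot t) (j : Fin s) :
    (observabilityMatrix (F.form a (some j)) ((F.pencil a).map (eval t))).det ≠ 0 := by
  have h := ha.eval_degeneracyPoly_ne_zero ht
  rw [degeneracyPoly, eval_mul, eval_prod] at h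
  rw [← eval_kalmanPoly]
  exact Finset.prod_ne_zero_iff.1 (right_ne_zero_of_mul h) j (Finset.mem_univ j)

lemma IsGeneric.finite_and_ncard_fibre (ha : F.IsGeneric a) (P : IdxPartition s k) {t : ℂ}
    (ht : (F.kalmanPoly a (F.eliminant a)).IsRoot t) :
    (F.fibre a P t).Finite ∧ (F.fibre a P t).ncard = (n - 1).descFactorial (k - 1) := by
  have hM := ha.charpoly_separable ht
  have hl : (observabilityMatrix (F.eliminant a) ((F.pencil a).map (eval t))).det = 0 := by
    rw [← eval_kalmanPoly, ht]
  obtain ⟨lam, hlam⟩ := exists_eigenvalue_dotProduct_eq_zero_iff ha.separable hl hM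
  obtain ⟨g, hg, hrange⟩ := exists_range_eq_eigenTuples (fun c => ⟨P.rep c, P.index_rep c⟩) hM
    (fun j => ha.const_ne_zero (some j)) (ha.det_observabilityMatrix_form_ne_zero ht) hlam
  have : Finite {μ // ((F.pencil a).map (eval t)).charpoly.IsRoot μ} :=
    (finite_setOfPred_isRoot (charpoly_monic _).ne_zero).to_subtype
  have := Fintype.ofFinite {μ // ((F.pencil a).map (eval t)).charpoly.IsRoot μ}
  rw [fibre, ← hrange]
  refine ⟨Set.finite_range g, ?_⟩
  rw [Set.ncard_range_of_injective hg, card_embedding_apply_eq, ← Nat.card_eq_fintype_card,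
    card_isRoot_of_separable hM, charpoly_natDegree_eq_dim, Fintype.card_fin, Fintype.card_fin]

lemma mem_inter_mSlice_iff (hn : 2 ≤ n) (ha : F.IsGeneric a) :
    x ∈ WsPcone n P ∩ mSlice γ a ↔ ∃ t : ℂ, (F.kalmanPoly a (F.eliminant a)).IsRoot t ∧
      (lineMatrix F.coord (a ∘ Sum.inl)).det • matPart x =
        (fun ij => (linePoint F.coord (a ∘ Sum.inl) ij).eval t) ∧
      vecPart x ∈ F.fibre a P t := by
  have hv (h : ∀ j, F.const a (some j) + F.form a (some j) ⬝ᵥ vecPart x j = 0) (j : Fin s) :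
      vecPart x j ≠ 0 := by
    intro h0
    simpa [h0, ha.const_ne_zero] using h j
  have hM {t : ℂ} (h : (lineMatrix F.coord (a ∘ Sum.inl)).det • matPart x =
      fun ij => (linePoint F.coord (a ∘ Sum.inl) ij).eval t) :
      (lineMatrix F.coord (a ∘ Sum.inl)).det • toMat (matPart x) =
        (F.pencil a).map (eval t) := by
    ext i j
    exact congrFun h (i, j)
  rw [Set.mem_inter_iff, mem_mSlice_iff ha]
  constructor
  · rintro ⟨hW, t, hline, hc, hl⟩
    have ht : (F.kalmanPoly a (F.eliminant a)).IsRoot t := by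
      obtain ⟨μ, hμ⟩ := exists_mulVec_vecPart_eq_smul hW (hv hc F.doubled)
      rw [IsRoot, eval_kalmanPoly, det_observabilityMatrix_eq_zero_iff, ← hM hline]
      exact ⟨_, hv hc F.doubled, ⟨_, by rw [smul_mulVec, hμ, smul_smul]⟩, hl⟩
    have hsep := ha.charpoly_separable ht
    rw [← hM hline] at hsep
    refine ⟨t, ht, hline, ?_, hc, hl⟩
    rw [← hM hline]
    exact (mem_WsPcone_iff hn ha.det_ne_zero hsep (hv hc)).1 hW
  · rintro ⟨t, ht, hline, hμ, hc, hl⟩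
    have hsep := ha.charpoly_separable ht
    rw [← hM hline] at hsep hμ
    exact ⟨(mem_WsPcone_iff hn ha.det_ne_zero hsep (hv hc)).2 hμ, t, hline, hc, hl⟩

lemma exists_range_eq_inter_mSlice (hn : 2 ≤ n) (ha : F.IsGeneric a) (P : IdxPartition s k) :
    ∃ g : (Σ t : {t // (F.kalmanPoly a (F.eliminant a)).IsRoot t}, F.fibre a P t) →
      MIdx n s → ℂ, Function.Injective g ∧ Set.range g = WsPcone n P ∩ mSlice γ a := by
  let d := (lineMatrix F.coord (a ∘ Sum.inl)).det
  have hd : d ≠ 0 := ha.det_ne_zero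
  let g (y : Σ t : {t // (F.kalmanPoly a (F.eliminant a)).IsRoot t}, F.fibre a P t) :
      MIdx n s → ℂ :=
    Sum.elim (fun ij => d⁻¹ * (linePoint F.coord (a ∘ Sum.inl) ij).eval y.1.1)
      fun jk => y.2.1 jk.1 jk.2
  have hline y : d • matPart (g y) =
      fun ij => (linePoint F.coord (a ∘ Sum.inl) ij).eval y.1.1 :=
    funext fun ij => mul_inv_cancel_left₀ hd _
  refine ⟨g, ?_, Set.Subset.antisymm ?_ fun x hx => ?_⟩
  · have hcoord y : matPart (g y) (F.coord none) = y.1 :=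
      ((smul_eq_linePoint_iff hd).1 (hline y)).1
    rintro ⟨⟨t, ht⟩, v⟩ ⟨⟨t', ht'⟩, v'⟩ h
    have htt' := hcoord ⟨⟨t, ht⟩, v⟩
    rw [h, hcoord] at htt'
    obtain rfl : t' = t := htt'
    obtain rfl : v = v' := Subtype.ext congr(vecPart $h)
    rfl
  · rintro _ ⟨y, rfl⟩
    exact (mem_inter_mSlice_iff hn ha).2 ⟨y.1, y.1.2, hline y, y.2.2⟩
  · obtain ⟨t, ht, hx, hv⟩ := (mem_inter_mSlice_iff hn ha).1 hx
    let y : Σ t : {t // (F.kalmanPoly a (F.eliminant a)).IsRoot t}, F.fibre a P t :=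
      ⟨⟨t, ht⟩, ⟨vecPart x, hv⟩⟩
    refine ⟨y, funext fun z => ?_⟩
    rcases z with ij | jk
    · exact mul_left_cancel₀ hd (congrFun ((hline y).trans hx.symm) ij)
    · rfl

lemma ncard_inter_mSlice (hn : 2 ≤ n) (ha : F.IsGeneric a) (P : IdxPartition s k) :
    (WsPcone n P ∩ mSlice γ a).ncard = n.choose 2 * (n - 1).descFactorial (k - 1) := by
  obtain ⟨g, hg, hrange⟩ := exists_range_eq_inter_mSlice hn ha P
  have hfibre (t : {t // (F.kalmanPoly a (F.eliminant a)).IsRoot t}) :=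
    ha.finite_and_ncard_fibre P t.2
  have (t : {t // (F.kalmanPoly a (F.eliminant a)).IsRoot t}) : Finite (F.fibre a P t) :=
    (hfibre t).1
  have : Finite {t // (F.kalmanPoly a (F.eliminant a)).IsRoot t} :=
    (finite_setOfPred_isRoot ha.separable.ne_zero).to_subtype
  have := Fintype.ofFinite {t // (F.kalmanPoly a (F.eliminant a)).IsRoot t}
  have hcard (t : {t // (F.kalmanPoly a (F.eliminant a)).IsRoot t}) :
      Nat.card (F.fibre a P t) = (n - 1).descFactorial (k - 1) := (hfibre t).2
  rw [← hrange, Set.ncard_range_of_injective hg, Nat.card_sigma,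
    Finset.sum_congr rfl fun t _ => hcard t, Finset.sum_const, Finset.card_univ, smul_eq_mul,
    ← Nat.card_eq_fintype_card, card_isRoot_of_separable ha.separable, ha.natDegree_eq]

lemma hasMD_WsPcone (hn : 2 ≤ n) (ha : F.IsGeneric a) (P : IdxPartition s k) :
    hasMD (WsPcone n P) γ (n.choose 2 * (n - 1).descFactorial (k - 1)) :=
  ⟨{b | F.IsGeneric b}, F.zOpen_isGeneric, ha.zDense, fun _ hb => ncard_inter_mSlice hn hb P⟩

end SliceFrame

section AppellPencil

open Polynomial Matrix

variable {n : ℕ} {R K : Type*} [CommRing R] [Field K]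

/-- The `j`-th Appell polynomial with sequence of constant terms `l`. -/
def appell (l : ℕ → R) (j : ℕ) : R[X] :=
  ∑ i ∈ Finset.range (j + 1), C (l i * j.choose i) * X ^ (j - i)

lemma derivative_appell (l : ℕ → R) (j : ℕ) :
    derivative (appell l (j + 1)) = C (j + 1 : R) * appell l j := by
  rw [appell, Finset.sum_range_succ, derivative_add, derivative_sum, appell, Finset.mul_sum]
  simp only [Nat.sub_self, pow_zero, mul_one, derivative_C, add_zero, derivative_C_mul_X_pow]
  refine Finset.sum_congr rfl fun i _ => ?_
  have hchoose := congrArg (Nat.cast (R := R)) (Nat.choose_mul_succ_eq j i)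
  push_cast at hchoose
  rw [← mul_assoc, ← C_mul, Nat.sub_right_comm, Nat.add_sub_cancel, mul_assoc, ← hchoose]
  congr 2
  ring

lemma appell_congr {l m : ℕ → R} {j : ℕ} (h : ∀ i ≤ j, l i = m i) : appell l j = appell m j :=
  Finset.sum_congr rfl fun i hi => by rw [h i (Finset.mem_range_succ_iff.1 hi)]

lemma appell_update (l : ℕ → R) (j : ℕ) (c : R) :
    appell (Function.update l j c) j = appell (Function.update l j 0) j + C c := by
  simp only [appell, Finset.sum_range_succ, Function.update_self, Nat.choose_self, Nat.cast_one,
    mul_one, Nat.sub_self, pow_zero, map_zero, add_zero, add_left_inj]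
  exact Finset.sum_congr rfl fun i hi => by
    rw [Function.update_of_ne (Finset.mem_range.1 hi).ne, Function.update_of_ne
      (Finset.mem_range.1 hi).ne]

lemma natDegree_appell_le (l : ℕ → R) (j : ℕ) : (appell l j).natDegree ≤ j :=
  natDegree_sum_le_of_forall_le _ _ fun _ _ =>
    (natDegree_C_mul_X_pow_le _ _).trans (Nat.sub_le _ _)

lemma coeff_appell_self (l : ℕ → R) (j : ℕ) : (appell l j).coeff j = l 0 := by
  rw [appell, finsetSum_coeff, Finset.sum_eq_single 0]
  · simp
  · intro i hi hi0
    rw [coeff_C_mul_X_pow, if_neg (by have := Finset.mem_range.1 hi; omega)]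
  · simp

lemma monic_appell {l : ℕ → R} (h : l 0 = 1) (j : ℕ) : (appell l j).Monic :=
  monic_of_natDegree_le_of_coeff_eq_one j (natDegree_appell_le l j) (by rw [coeff_appell_self, h])

lemma natDegree_appell [Nontrivial R] {l : ℕ → R} (h : l 0 = 1) (j : ℕ) :
    (appell l j).natDegree = j :=
  natDegree_eq_of_le_of_coeff_ne_zero (natDegree_appell_le l j)
    (by rw [coeff_appell_self, h]; exact one_ne_zero)

lemma appell_single_zero (j : ℕ) : appell (Pi.single 0 1 : ℕ → R) j = X ^ j := by
  simp [appell, Finset.sum_range_succ']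

lemma exists_isCoprime_add_C [IsAlgClosed K] {q : K[X]} (hq : q ≠ 0) (p : K[X]) :
    ∃ c, IsCoprime q (p + C c) := by
  obtain ⟨c, hc⟩ := ((finite_setOfPred_isRoot hq).image fun t => -p.eval t).exists_notMem
  refine ⟨c, (isCoprime_iff_aeval_ne_zero_of_isAlgClosed K K _ _).2 fun t => ?_⟩
  by_contra! h
  simp only [coe_aeval_eq_eval, eval_add, eval_C] at h
  exact hc ⟨t, h.1, neg_eq_of_add_eq_zero_right h.2⟩

lemma exists_separable_X_mul_prod_appell [IsAlgClosed K] [CharZero K] (n : ℕ) :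
    ∃ l : ℕ → K, l 0 = 1 ∧ (X * ∏ j ∈ Finset.range n, appell l j).Separable := by
  induction n with
  | zero => exact ⟨1, rfl, by simpa using separable_X⟩
  | succ n ih =>
    obtain ⟨l, hl0, hl⟩ := ih
    rcases n with _ | n
    · exact ⟨l, hl0, by simpa [appell, hl0] using separable_X⟩
    obtain ⟨c, hc⟩ := exists_isCoprime_add_C hl.ne_zero
      (appell (Function.update l (n + 1) 0) (n + 1))
    rw [← appell_update] at hc
    have hlow (j : ℕ) (hj : j < n + 1) : appell (Function.update l (n + 1) c) j = appell l j :=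
      appell_congr fun i hi => Function.update_of_ne (by omega) _ _
    refine ⟨Function.update l (n + 1) c, by rwa [Function.update_of_ne (by omega)], ?_⟩
    rw [Finset.prod_range_succ, Finset.prod_congr rfl fun j hj => hlow j (Finset.mem_range.1 hj),
      ← mul_assoc]
    refine hl.mul ?_ hc
    rw [Separable, derivative_appell, hlow n n.lt_succ_self]
    have hunit := isUnit_C.2 (Nat.cast_add_one_ne_zero (R := K) n).isUnit
    refine (isCoprime_mul_unit_left_right hunit _ _).2 (hc.of_isCoprime_of_dvd_left ?_).symm
    exact (Finset.dvd_prod_of_mem _ (Finset.self_mem_range_succ n)).mul_left _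

variable (R n) in
/-- The pencil `diag(0, 1, …, n - 1) + X N`, where `N` has the superdiagonal `1, …, n - 1`: its
eigenvectors are given by the binomial coefficients, so that its Kalman determinants are products
of Appell polynomials. -/
def appellPencil : Matrix (Fin n) (Fin n) R[X] :=
  Matrix.of fun i j =>
    C (if i = j then (j : R) else 0) + C (if (i : ℕ) + 1 = j then (j : R) else 0) * X

variable (R n) in
/-- The matrix whose columns are eigenvectors of the Appell pencil. -/
def appellEigenvectors : Matrix (Fin n) (Fin n) R[X] :=
  Matrix.of fun i j => C ((j : ℕ).choose i : R) * X ^ ((j : ℕ) - i)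

lemma choose_mul_X_pow_add_choose_succ_mul_X_pow (j i : ℕ) :
    (i : R[X]) * ((j.choose i : R[X]) * X ^ (j - i)) +
      (i + 1 : R[X]) * X * ((j.choose (i + 1) : R[X]) * X ^ (j - (i + 1))) =
      (j : R[X]) * ((j.choose i : R[X]) * X ^ (j - i)) := by
  have hchoose := congrArg (Nat.cast (R := R[X])) (Nat.choose_succ_right_eq j i)
  rcases lt_trichotomy i j with hij | rfl | hij
  · obtain ⟨d, rfl⟩ := Nat.exists_eq_add_of_lt hij
    rw [show i + d + 1 - i = d + 1 by omega] at hchoose ⊢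
    rw [show i + d + 1 - (i + 1) = d by omega]
    push_cast at hchoose ⊢
    linear_combination X ^ (d + 1) * hchoose
  · simp
  · simp [Nat.choose_eq_zero_of_lt hij, Nat.choose_eq_zero_of_lt (hij.trans i.lt_succ_self)]

lemma appellPencil_mulVec (j : Fin n) :
    appellPencil n R *ᵥ (appellEigenvectors n R).col j =
      C ((j : ℕ) : R) • (appellEigenvectors n R).col j := by
  ext1 i
  let v (k : ℕ) : R[X] := ((j : ℕ).choose k : R[X]) * X ^ ((j : ℕ) - k)
  have hsuper : ∑ k : Fin n, (if (i : ℕ) + 1 = k then (k : R[X]) * X * v k else 0) =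
      ((i : ℕ) + 1 : R[X]) * X * v (i + 1) := by
    rw [Fin.sum_univ_eq_sum_range fun k => if (i : ℕ) + 1 = k then (k : R[X]) * X * v k else 0,
      Finset.sum_ite_eq]
    split_ifs with hi
    · simp
    · have hj : (j : ℕ).choose (i + 1) = 0 :=
        Nat.choose_eq_zero_of_lt (by have := Finset.mem_range.not.1 hi; omega)
      simp [v, hj]
  have h : (i : R[X]) * v i + ((i : ℕ) + 1 : R[X]) * X * v (i + 1) = (j : R[X]) * v i :=
    choose_mul_X_pow_add_choose_succ_mul_X_pow j i
  rw [← hsuper] at h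
  simpa [appellPencil, appellEigenvectors, mulVec, dotProduct, add_mul, Finset.sum_add_distrib,
    apply_ite C, v] using h

lemma vecMul_appellEigenvectors (l : ℕ → R) (j : Fin n) :
    ((fun i : Fin n => C (l i)) ᵥ* appellEigenvectors n R) j = appell l j := by
  simp only [vecMul, dotProduct, appellEigenvectors, of_apply, ← mul_assoc, ← C_mul]
  rw [Fin.sum_univ_eq_sum_range fun i => C (l i * (j : ℕ).choose i) * X ^ ((j : ℕ) - i), appell]
  refine (Finset.sum_subset (Finset.range_mono j.isLt) fun i _ hi => ?_).symm
  simp [Nat.choose_eq_zero_of_lt (Nat.lt_of_not_ge (Finset.mem_range_succ_iff.not.1 hi))]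

lemma det_appellEigenvectors : (appellEigenvectors n R).det = 1 := by
  rw [det_of_isUpperTriangular]
  · simp [appellEigenvectors]
  · intro i j hji
    simp [appellEigenvectors, Nat.choose_eq_zero_of_lt (show (j : ℕ) < i from hji)]

lemma observabilityMatrix_mul {A V : Matrix (Fin n) (Fin n) R} {μ : Fin n → R}
    (h : ∀ j, A *ᵥ V.col j = μ j • V.col j) (l : Fin n → R) :
    observabilityMatrix l A * V = (vandermonde μ)ᵀ * diagonal (l ᵥ* V) := by
  ext i j
  rw [mul_diagonal]
  exact congrFun (observabilityMatrix_mulVec_eigenvector (h j) l) i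

lemma det_observabilityMatrix_appellPencil (l : ℕ → R) :
    (observabilityMatrix (fun i : Fin n => C (l i)) (appellPencil n R)).det =
      C (vandermonde fun i : Fin n => ((i : ℕ) : R)).det *
        ∏ j ∈ Finset.range n, appell l j := by
  have h := congrArg det (observabilityMatrix_mul appellPencil_mulVec fun i : Fin n => C (l i))
  rw [det_mul, det_appellEigenvectors, mul_one, det_mul, det_transpose, det_diagonal] at h
  simp only [vecMul_appellEigenvectors] at h
  rw [h, Fin.prod_univ_eq_prod_range (appell l), RingHom.map_det]
  congr 2
  ext1 i j
  simp [vandermonde_apply]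

lemma charpolyDisc_appellPencil :
    charpolyDisc (appellPencil n R) =
      C (charpolyDisc (diagonal fun i : Fin n => ((i : ℕ) : R))) := by
  have hupper : (appellPencil n R).IsUpperTriangular := by
    intro i j hji
    have hji : (j : ℕ) < i := hji
    simp [appellPencil, Fin.ext_iff, hji.ne', show (i : ℕ) + 1 ≠ j by omega]
  have hcharpoly : (appellPencil n R).charpoly = ∏ i : Fin n, (X - C (C ((i : ℕ) : R))) := by
    refine (charpoly_of_isUpperTriangular _ hupper).trans (Finset.prod_congr rfl fun i _ => ?_)
    simp [appellPencil]
  rw [← charpolyDisc_map, charpolyDisc, charpolyDisc, hcharpoly, diagonal_map C_0,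
    charpoly_diagonal]

lemma charpolyDisc_diagonal_natCast_ne_zero [CharZero K] :
    charpolyDisc (diagonal fun i : Fin n => ((i : ℕ) : K)) ≠ 0 := by
  rw [charpolyDisc_ne_zero_iff, charpoly_diagonal, separable_prod_X_sub_C_iff]
  exact Nat.cast_injective.comp Fin.val_injective

end AppellPencil

namespace SliceFrame

open Polynomial Matrix

variable {n s : ℕ} {γ : Fin (s + 1) → ℕ} (F : SliceFrame n s γ) {R K : Type*}

lemma exists_const_eq_form_eq (b : Fin (n ^ 2 - γ 0) × Option (Fin n × Fin n) → R)
    (c : Option (Fin s) → R) (m : Option (Fin s) → Fin n → R) :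
    ∃ a : MSliceParam n s γ → R, a ∘ Sum.inl = b ∧ F.const a = c ∧ F.form a = m := by
  refine ⟨Sum.elim b fun p => p.2.elim (c (F.row.symm p.1)) (m (F.row.symm p.1)), ?_, ?_, ?_⟩
  · simp
  · ext o
    simp [const]
  · ext o k
    simp [form]

variable {F}

lemma exists_pencil_eq_appellPencil [CommRing R] (h0 : ((F.coord none).1 : ℕ) = 0)
    (h1 : ((F.coord none).2 : ℕ) = 1) (c : Option (Fin s) → R) (m : Option (Fin s) → Fin n → R) :
    ∃ a : MSliceParam n s γ → R, (lineMatrix F.coord (a ∘ Sum.inl)).det = 1 ∧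
      F.pencil a = appellPencil n R ∧ F.const a = c ∧ F.form a = m := by
  obtain ⟨b, hdet, hb⟩ := exists_linePoint_eq F.coord
    (d := fun p => if p.1 = p.2 then ((p.2 : ℕ) : R) else 0)
    (u := fun p => if (p.1 : ℕ) + 1 = p.2 then ((p.2 : ℕ) : R) else 0)
    (by simp [Fin.ext_iff, h0, h1]) (by simp [h0, h1])
  obtain ⟨a, rfl, hc, hm⟩ := F.exists_const_eq_form_eq b c m
  refine ⟨a, hdet, ?_, hc, hm⟩
  ext1 i j
  exact hb (i, j)

theorem exists_isGeneric [Field K] [IsAlgClosed K] [CharZero K] (h0 : ((F.coord none).1 : ℕ) = 0)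
    (h1 : ((F.coord none).2 : ℕ) = 1) : ∃ a : MSliceParam n s γ → K, F.IsGeneric a := by
  obtain ⟨l, hl0, hl⟩ := exists_separable_X_mul_prod_appell (K := K) n
  let e₀ : Fin n → K := fun i => Pi.single (M := fun _ : ℕ => K) 0 1 i
  obtain ⟨a, hdet, hA, hconst, hform⟩ := exists_pencil_eq_appellPencil (F := F) h0 h1 1
    fun o => o.elim (e₀ - fun i : Fin n => l i) fun _ => e₀
  have hc0 : (vandermonde fun i : Fin n => ((i : ℕ) : K)).det ≠ 0 :=
    det_vandermonde_ne_zero_iff.2 (Nat.cast_injective.comp Fin.val_injective)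
  have hc := isUnit_C.2 hc0.isUnit
  have helim : F.kalmanPoly a (F.eliminant a) =
      C (vandermonde fun i : Fin n => ((i : ℕ) : K)).det * ∏ j ∈ Finset.range n, appell l j := by
    rw [← det_observabilityMatrix_appellPencil, kalmanPoly, hA]
    simp [eliminant, hconst, hform, Function.comp_def]
  have hform_some (j : Fin s) : F.kalmanPoly a (F.form a (some j)) =
      C (vandermonde fun i : Fin n => ((i : ℕ) : K)).det * ∏ j ∈ Finset.range n, X ^ j := by
    simp_rw [← appell_single_zero]
    rw [← det_observabilityMatrix_appellPencil, kalmanPoly, hA, hform]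
    rfl
  have hmonic (j : ℕ) (_ : j ∈ Finset.range n) := monic_appell hl0 j
  refine ⟨a, by simp [hdet], by simp [hconst], ?_, ?_, ?_⟩
  · rw [helim, natDegree_C_mul hc0, natDegree_prod_of_monic _ _ hmonic]
    simp [natDegree_appell hl0, Finset.sum_range_id, Nat.choose_two_right]
  · rw [helim]
    exact hl.of_mul_right.unit_mul hc
  · rw [degeneracyPoly, hA, charpolyDisc_appellPencil, helim]
    simp only [hform_some]
    have hdisc : IsUnit (C (charpolyDisc (diagonal fun i : Fin n => ((i : ℕ) : K)))) :=
      isUnit_C.2 charpolyDisc_diagonal_natCast_ne_zero.isUnit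
    rw [isCoprime_mul_unit_left_left hc, isCoprime_mul_unit_left_right hdisc]
    refine IsCoprime.prod_right fun _ _ => (isCoprime_mul_unit_left_right hc _ _).2 ?_
    exact IsCoprime.prod_right fun _ _ => hl.isCoprime.symm.pow_right

end SliceFrame

section SpecialExp

lemma exists_optionEquiv_sigma_fin {ι : Type*} {d : ι → ℕ} {i : ι} (hi : d i = 2)
    (hd : ∀ j ≠ i, d j = 1) :
    ∃ e : Option ι ≃ Σ j, Fin (d j), ∀ j, (e (some j)).1 = j := by
  have hpos (j : ι) : 0 < d j := by
    rcases eq_or_ne j i with rfl | hji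
    · omega
    · rw [hd j hji]; exact one_pos
  let f : Option ι → Σ j, Fin (d j) :=
    fun o => o.elim ⟨i, 1, by omega⟩ fun j => ⟨j, 0, hpos j⟩
  suffices hf : Function.Bijective f from ⟨Equiv.ofBijective f hf, fun _ => rfl⟩
  refine ⟨?_, fun ⟨j, q⟩ => ?_⟩
  · rintro (_ | j) (_ | j') h
    · rfl
    · obtain rfl : i = j' := congrArg Sigma.fst h
      simp [f] at h
    · obtain rfl : j = i := congrArg Sigma.fst h
      simp [f] at h
    · rw [show j = j' from congrArg Sigma.fst h]
  · by_cases hq : (q : ℕ) = 0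
    · exact ⟨some j, by simp [f, Fin.ext_iff, hq]⟩
    · obtain rfl : j = i := by
        by_contra hji
        have := hd j hji
        omega
      obtain rfl : q = ⟨1, by omega⟩ := Fin.ext (by have := q.2; dsimp only; omega)
      exact ⟨none, rfl⟩

variable {n s k : ℕ}

lemma exists_sliceFrame (hn : 2 ≤ n) (i : Fin s) :
    ∃ F : SliceFrame n s (specialExp n s i),
      ((F.coord none).1 : ℕ) = 0 ∧ ((F.coord none).2 : ℕ) = 1 := by
  have hi : n - specialExp n s i i.succ = 2 := by
    rw [specialExp, if_neg (Fin.succ_ne_zero i), if_pos rfl]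
    omega
  have hne (j : Fin s) (hji : j ≠ i) : n - specialExp n s i j.succ = 1 := by
    rw [specialExp, if_neg (Fin.succ_ne_zero j), if_neg ((Fin.succ_injective s).ne hji)]
    omega
  obtain ⟨row, hrow⟩ :=
    exists_optionEquiv_sigma_fin (d := fun j : Fin s => n - specialExp n s i j.succ) hi hne
  have hcard : Fintype.card (Option (Fin (n ^ 2 - specialExp n s i 0))) =
      Fintype.card (Fin n × Fin n) := by
    have : 0 < n ^ 2 := by positivity
    rw [Fintype.card_option, Fintype.card_fin, Fintype.card_prod, Fintype.card_fin, ← pow_two,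
      specialExp, if_pos rfl]
    omega
  let e := Fintype.equivOfCardEq hcard
  exact ⟨⟨e.trans (Equiv.swap (e none) (⟨0, by omega⟩, ⟨1, hn⟩)), row, hrow⟩, by simp, by simp⟩

lemma hasMD_WsPcone_of_lt (h : n < k) (P : IdxPartition s k) (γ : Fin (s + 1) → ℕ) :
    hasMD (WsPcone n P) γ 0 := by
  have hempty : {x | x ∈ Wcone n s ∧ PCompatible P fun i => vecPart x i} = ∅ := by
    refine Set.eq_empty_of_forall_notMem fun x hx => ?_
    have hkn := (hx.2.2.2 P.rep fun c => (P.block c).min'_mem _).fintype_card_le_finrank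
    rw [Fintype.card_fin, Module.finrank_fin_fun] at hkn
    exact hkn.not_gt h
  refine ⟨{a | MvPolynomial.eval a 1 ≠ 0}, zOpen_eval_ne_zero 1, zDense_eval_ne_zero one_ne_zero,
    fun a _ => ?_⟩
  simp [WsPcone, hempty, zClosure_empty]

lemma mem_WsPcone_one (hk : k ≤ 1) (P : IdxPartition s k) {x : MIdx 1 s → ℂ}
    (hA : matPart x ≠ 0) (hv : ∀ j, vecPart x j ≠ 0) : x ∈ WsPcone 1 P := by
  have hv0 (j : Fin s) : vecPart x j 0 ≠ 0 := fun h => hv j (by ext q; rwa [Subsingleton.elim q 0])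
  refine subset_zClosure _ ⟨⟨hA, fun j => ⟨hv j, matPart x (0, 0), ?_⟩⟩, hv, ?_, ?_⟩
  · ext q
    simp [Subsingleton.elim q 0, Matrix.mulVec, dotProduct, toMat]
  · refine fun _ p _ q _ => ⟨vecPart x p 0 / vecPart x q 0, ?_⟩
    ext r
    simp [Subsingleton.elim r 0, div_mul_cancel₀ _ (hv0 q)]
  · intro r _
    have := Fin.subsingleton_iff_le_one.2 hk
    exact (linearIndependent_subsingleton_index_iff _).2 fun c => hv _

lemma hasMD_WsPcone_one (hk : k ≤ 1) (P : IdxPartition s k) (i : Fin s) :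
    hasMD (WsPcone 1 P) (specialExp 1 s i) 0 := by
  let p : MvPolynomial (MSliceParam 1 s (specialExp 1 s i)) ℂ :=
    ∏ q, (MvPolynomial.X (Sum.inr (q, none)) * MvPolynomial.X (Sum.inr (q, some 0)))
  have hp : p ≠ 0 := Finset.prod_ne_zero_iff.2 fun _ _ =>
    mul_ne_zero (MvPolynomial.X_ne_zero _) (MvPolynomial.X_ne_zero _)
  refine ⟨_, zOpen_eval_ne_zero p, zDense_eval_ne_zero hp, fun a ha => Set.Infinite.ncard ?_⟩
  have ha (q) : a (Sum.inr (q, none)) ≠ 0 ∧ a (Sum.inr (q, some 0)) ≠ 0 := by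
    rw [Set.mem_ofPred_eq, map_prod, Finset.prod_ne_zero_iff] at ha
    simpa using ha q (Finset.mem_univ q)
  let x (t : ℂ) : MIdx 1 s → ℂ := Sum.elim (fun _ => t) fun jk =>
    -a (Sum.inr (⟨jk.1, ⟨0, by simp [specialExp]⟩⟩, none)) /
      a (Sum.inr (⟨jk.1, ⟨0, by simp [specialExp]⟩⟩, some 0))
  have hx : Function.Injective x := fun t u h => congrFun h (Sum.inl (0, 0))
  refine ((Set.finite_singleton (0 : ℂ)).infinite_compl.image hx.injOn).mono ?_
  rintro _ ⟨t, ht, rfl⟩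
  refine ⟨mem_WsPcone_one hk P (fun h => ht (congrFun h (0, 0))) fun j h => ?_, ?_, ?_⟩
  · exact div_ne_zero (neg_ne_zero.2 (ha _).1) (ha _).2 (congrFun h 0)
  · exact fun r => absurd r.2 (by simp [specialExp])
  · intro j r
    have hr : 1 - specialExp 1 s i j.succ = 1 := by simp [specialExp]
    obtain rfl : r = ⟨0, by omega⟩ := Fin.ext (by omega)
    simp [x, mul_div_cancel₀ _ (ha _).2]

end SpecialExp

theorem WsP_coefficient_equality_general (n s k : ℕ) (hn : 0 < n) (P : IdxPartition s k)
    (i : Fin s) :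
    hasMD (WsPcone n P) (specialExp n s i) (n.choose 2 * (n - 1).descFactorial (k - 1)) := by
  obtain rfl | hn2 : n = 1 ∨ 2 ≤ n := by omega
  · rw [Nat.choose_eq_zero_of_lt one_lt_two, zero_mul]
    rcases le_or_gt k 1 with hk | hk
    · exact hasMD_WsPcone_one hk P i
    · exact hasMD_WsPcone_of_lt hk P _
  · obtain ⟨F, h0, h1⟩ := exists_sliceFrame hn2 i
    obtain ⟨a, ha⟩ := SliceFrame.exists_isGeneric (K := ℂ) h0 h1
    exact SliceFrame.hasMD_WsPcone hn2 ha P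

/-- For every partition `P` of `{1, …, s}`, the coefficient `c_{s,P}` of
`h_0 ∑_i h_1^{n-1} ⋯ h_i^{n-2} ⋯ h_s^{n-1}` in `[W_{s,P}]` equals the coefficient of
`h_0 ∑_i h_1^{n-1} ⋯ h_i^{n-2} ⋯ h_{|P|}^{n-1}` in `[W̃_{|P|}]`. -/
theorem WsP_coefficient_equality (n s k : ℕ) (hn : 0 < n) (hs : 0 < s) (hsn : s ≤ n)
    (P : IdxPartition s k) :
    ∃ c : ℕ,
      (∀ i : Fin s, hasMD (WsPcone n P) (specialExp n s i) c) ∧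
      (∀ i : Fin k, hasMD (WsPcone n (singletonPartition k)) (specialExp n k i) c) := by
  exact ⟨_, WsP_coefficient_equality_general n s k hn P,
    WsP_coefficient_equality_general n k k hn (singletonPartition k)⟩

end
end
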